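/- Let n ≥ 3 and (a_1, …, a_n) ∈ Γ_n. Let D be the set of positive divisors of ∏_{i=1}^n (L/L_i), and for d ∈ D let f(d) = (a_1', …, a_n') where a_i' = gcd(a_i, L_i) · ((L/L_i)/gcd(d, L/L_i)). Assume that for every d ∈ D with f(d) ∈ Γ_n, the ring B_{ℂ;f(d)} is rigid. For ν ∈ {1,2}, let I_ν = { i ∈ {1,…,n} : gcd(a_i, L_i) = ν }. Then at most one element i_0 ∈ I_2 satisfies a_{i_0} = 2, and: if no such i_0 exists, M(B_{ℂ;a_1,…,a_n}) = { a_i : i ∈ I_1 } ∪ { a_i·a_j/4 : i, j ∈ I_2, i ≠ j }; if i_0 exists, M(B_{ℂ;a_1,…,a_n}) = { a_i : i ∈ I_1 } ∪ { a_i/2 : i ∈ I_2 \ {i_0} }. -/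

import Mathlib

noncomputable section

/-- A derivation is locally nilpotent. -/
def IsLND {R : Type*} [CommRing R] (D : Derivation ℤ R R) : Prop :=
  ∀ b : R, ∃ n : ℕ, 0 < n ∧ (⇑D)^[n] b = 0

/-- Kernel of a derivation, as a subring. -/
def kerDer {R : Type*} [CommRing R] (D : Derivation ℤ R R) : Subring R where
  carrier := {x | D x = 0}
  one_mem' := by simp
  mul_mem' := by
    intro a b ha hb
    simp only [Set.mem_setOf_eq] at *
    rw [Derivation.leibniz, ha, hb]
    simp
  add_mem' := by
    intro a b ha hb
    simp only [Set.mem_setOf_eq] at *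
    rw [map_add, ha, hb, add_zero]
  zero_mem' := by simp
  neg_mem' := by
    intro a ha
    simp only [Set.mem_setOf_eq] at *
    rw [map_neg, ha, neg_zero]

section Graded

variable {G : Type*} [AddCommGroup G] {B : Type*} [CommRing B]

/-- The Veronese subring `B^{(H)} = ⊕_{i ∈ H} B_i` of a `G`-graded ring,
realized as the subring generated by the homogeneous elements whose degree lies in `H`. -/
def verSub (𝒜 : G → AddSubgroup B) (H : AddSubgroup G) : Subring B :=
  Subring.closure (⋃ i ∈ (H : Set G), (𝒜 i : Set B))

/-- 𝔾(B): the subgroup of G generated by the degrees of nonzero homogeneous elements. -/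
def Gsub (𝒜 : G → AddSubgroup B) : AddSubgroup G :=
  AddSubgroup.closure { i : G | 𝒜 i ≠ ⊥ }

/-- `H ∈ 𝕋(B)`: the quotient `𝔾(B)/(H ∩ 𝔾(B))` is torsion. -/
def Tmem (𝒜 : G → AddSubgroup B) (H : AddSubgroup G) : Prop :=
  ∀ g ∈ Gsub 𝒜, ∃ n : ℕ, 0 < n ∧ n • g ∈ H

/-- A homogeneous derivation of `B`. -/
def IsHomogDer (𝒜 : G → AddSubgroup B) (D : Derivation ℤ B B) : Prop :=
  ∃ d : G, ∀ (i : G) (x : B), x ∈ 𝒜 i → D x ∈ 𝒜 (i + d)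

/-- A homogeneous derivation of a graded subring `S` of `B`. -/
def IsHomogDerOn (𝒜 : G → AddSubgroup B) (S : Subring B) (D : Derivation ℤ S S) : Prop :=
  ∃ d : G, ∀ (i : G) (x : S), (x : B) ∈ 𝒜 i → ((D x : S) : B) ∈ 𝒜 (i + d)

/-- 𝕄̄(B,p): the subgroup of G generated by the degrees i with B_i ⊄ p. -/
def Mbar (𝒜 : G → AddSubgroup B) (p : Ideal B) : AddSubgroup G :=
  AddSubgroup.closure { i : G | ¬ (𝒜 i : Set B) ⊆ (p : Set B) }

/-- A prime ideal of height 1. -/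
def heightOne {R : Type*} [CommRing R] (p : Ideal R) : Prop :=
  p.IsPrime ∧ (∃ q : Ideal R, q.IsPrime ∧ q < p) ∧
    ∀ q r : Ideal R, q.IsPrime → r.IsPrime → q < r → r < p → False

open Classical in
/-- 𝔾̄(B). -/
def Gbar (𝒜 : G → AddSubgroup B) : AddSubgroup G :=
  if ∃ p : Ideal B, heightOne p then ⨅ p : {p : Ideal B // heightOne p}, Mbar 𝒜 p.1
  else Gsub 𝒜

end Graded

/-- The nonnegative generator of a subgroup of ℤ (so that the gcd of a set of integers
is `groupGen` of the subgroup it generates, and the lcm of a set of integers is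
`groupGen` of the intersection of the subgroups its elements generate). -/
noncomputable def groupGen (H : AddSubgroup ℤ) : ℕ :=
  (Submodule.IsPrincipal.generator (AddSubgroup.toIntSubmodule H : Ideal ℤ)).natAbs

section ZGraded

variable {B : Type*} [CommRing B]

/-- The set of height-1 homogeneous prime ideals of a ℤ-graded ring. -/
def homogHt1 (𝒜 : ℤ → AddSubgroup B) : Set (Ideal B) :=
  { p | heightOne p ∧ p = Ideal.span { x : B | x ∈ p ∧ ∃ i : ℤ, x ∈ 𝒜 i } }

/-- The saturation index e(B) = gcd{ n : B_n ≠ 0 } of a ℤ-graded ring. -/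
noncomputable def eB (𝒜 : ℤ → AddSubgroup B) : ℕ :=
  groupGen (Gsub 𝒜)

open Classical in
/-- The codimension-1 saturation index ē(B) = lcm{ e(B/p) : p ∈ Z } (Z the set of
height-1 homogeneous primes) if Z ≠ ∅, and ē(B) = e(B) if Z = ∅.  Here
e(B/p)ℤ = 𝕄̄(B,p), so the lcm is computed as the intersection of the 𝕄̄(B,p). -/
noncomputable def ebarB (𝒜 : ℤ → AddSubgroup B) : ℕ :=
  if (homogHt1 𝒜).Nonempty then groupGen (⨅ p : homogHt1 𝒜, Mbar 𝒜 p.1) else eB 𝒜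

end ZGraded

section PB

/-- The Pham–Brieskorn ring B_{k;a₁,…,aₙ} = k[X₁,…,Xₙ]/(X₁^{a₁} + ⋯ + Xₙ^{aₙ}). -/
noncomputable abbrev PBring (k : Type*) [Field k] {n : ℕ} (a : Fin n → ℕ) :=
  MvPolynomial (Fin n) k ⧸
    Ideal.span ({∑ i : Fin n, MvPolynomial.X i ^ a i} : Set (MvPolynomial (Fin n) k))

/-- L = lcm(a₁,…,aₙ). -/
def Ltot {n : ℕ} (a : Fin n → ℕ) : ℕ := Finset.univ.lcm a

/-- Lᵢ = lcm{ aⱼ : j ≠ i }. -/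
def Lpart {n : ℕ} (a : Fin n → ℕ) (i : Fin n) : ℕ := (Finset.univ.erase i).lcm a

/-- The degree-m part of the Pham–Brieskorn ring (for its ℕ-grading, in which the
image xᵢ of Xᵢ is homogeneous of degree L/aᵢ): the image of the space of weighted
homogeneous polynomials of weighted degree m. -/
noncomputable def PBpiece (k : Type*) [Field k] {n : ℕ} (a : Fin n → ℕ) (m : ℤ) :
    AddSubgroup (PBring k a) :=
  if 0 ≤ m then
    AddSubgroup.map
      (Ideal.Quotient.mk _).toAddMonoidHom
      ((MvPolynomial.weightedHomogeneousSubmodule k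
          (fun i => Ltot a / a i) m.toNat).toAddSubgroup)
  else ⊥

/-- The d-th Veronese subring of the Pham–Brieskorn ring. -/
noncomputable def PBver (k : Type*) [Field k] {n : ℕ} (a : Fin n → ℕ) (d : ℕ) :
    Subring (PBring k a) :=
  Subring.closure (⋃ m ∈ {m : ℤ | (d : ℤ) ∣ m}, (PBpiece k a m : Set (PBring k a)))

/-- The exponents a′ of the Pham–Brieskorn ring isomorphic to the d-th Veronese subring:
aᵢ′ = gcd(aᵢ, Lᵢ) · ((L/Lᵢ)/gcd(d, L/Lᵢ)). -/
def PBexp {n : ℕ} (a : Fin n → ℕ) (d : ℕ) : Fin n → ℕ :=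
  fun i => Nat.gcd (a i) (Lpart a i) * ((Ltot a / Lpart a i) / Nat.gcd d (Ltot a / Lpart a i))

end PB

set_option synthInstance.maxHeartbeats 1000000
set_option maxHeartbeats 1000000

section NR

variable {B : Type*} [CommRing B]

/-- The d-th Veronese subring B^{(d)} of a ℤ-graded ring. -/
noncomputable def verZ (𝒜 : ℤ → AddSubgroup B) (d : ℕ) : Subring B :=
  verSub 𝒜 (AddSubgroup.zmultiples (d : ℤ))

/-- NR(B): the set of d ≥ 1 such that B^{(d)} is non-rigid. -/
noncomputable def NRset (𝒜 : ℤ → AddSubgroup B) : Set ℕ :=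
  { d | 1 ≤ d ∧ ∃ D : Derivation ℤ (verZ 𝒜 d) (verZ 𝒜 d), IsLND D ∧ D ≠ 0 }

/-- M(B): the maximal elements of NR(B) for the order d₁ ≼ d₂ ⟺ d₂ ∣ d₁. -/
noncomputable def MsetZ (𝒜 : ℤ → AddSubgroup B) : Set ℕ :=
  { d | d ∈ NRset 𝒜 ∧ ∀ e ∈ NRset 𝒜, e ∣ d → e = d }

end NR

/-- (a₁,…,aₙ) ∈ Γₙ: all aᵢ > 1 and at most one index i has aᵢ = 2. -/
def GammaCond {n : ℕ} (a : Fin n → ℕ) : Prop :=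
  (∀ i, 2 ≤ a i) ∧ ∀ i j : Fin n, a i = 2 → a j = 2 → i = j

/-! Let `B` be the Pham–Brieskorn ring of `a` and `ℓᵢ = L / Lᵢ`; the `ℓᵢ` are pairwise coprime and
`aᵢ = gcd(aᵢ, Lᵢ) ℓᵢ`. Two facts reduce everything to arithmetic of the `ℓᵢ`.

* If `g ∣ ∏ ℓᵢ`, then `Xᵢ ↦ Xᵢ ^ gcd(g, ℓᵢ)` identifies the Pham–Brieskorn ring of `f(g)` with
  `B^{(g)}`.
* If `B^{(d)}` is non-rigid and `g = gcd(d, ∏ ℓᵢ)`, then `B^{(g)}` is non-rigid. Indeed `B^{(g)}`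
  is an algebraic extension of `B^{(d)}`, so a locally nilpotent derivation of `B^{(d)}` extends to
  the fraction field of `B`. The extension maps `B^{(g)}` to itself because its values on monomials
  have no pole along any `xᵢ`, and it is locally nilpotent on `B^{(g)}` because the powers of the
  elements it produces from a monomial lie in `B^{(d)}`.

Hence `d ∈ NR(B)` forces `f(g) ∉ Γₙ`: either some entry of `f(g)` is `1`, which means
`gcd(aᵢ, Lᵢ) = 1` and `ℓᵢ ∣ d`, or two entries are `2`, which means `gcd(aᵢ, Lᵢ) = gcd(aⱼ, Lⱼ) = 2`
and `ℓᵢ ℓⱼ ∣ d`. In both cases the Pham–Brieskorn ring does carry an explicit nonzero triangular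
derivation, so `M(B)` consists of the minimal elements, for divisibility, among these `ℓᵢ` and
`ℓᵢ ℓⱼ`.
-/

section LocallyNilpotent

variable {R : Type*} [CommRing R]

/-- A ring is non-rigid when it carries a nonzero locally nilpotent derivation. -/
def NonRigid (R : Type*) [CommRing R] : Prop :=
  ∃ D : Derivation ℤ R R, IsLND D ∧ D ≠ 0

section Iterate

variable {k : Type*} [CommRing k] [Algebra k R] (D : Derivation k R R)

theorem iterate_derivation_mul (n : ℕ) (a b : R) :
    D^[n] (a * b) = ∑ ij ∈ Finset.HasAntidiagonal.antidiagonal n,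
      n.choose ij.1 * (D^[ij.1] a * D^[ij.2] b) := by
  induction n with
  | zero => simp
  | succ n ih =>
    rw [Function.iterate_succ_apply', ih,
      Finset.sum_antidiagonal_choose_succ_mul (fun i j => D^[i] a * D^[j] b), map_sum,
      ← Finset.sum_add_distrib]
    refine Finset.sum_congr rfl fun ⟨i, j⟩ hij => ?_
    rw [n.choose_symm_of_eq_add (Finset.HasAntidiagonal.mem_antidiagonal.1 hij).symm,
      Derivation.leibniz, Derivation.leibniz, Derivation.map_natCast]
    simp only [Function.iterate_succ_apply', smul_eq_mul]
    ring

variable {D}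

theorem iterate_eq_zero_of_le {m n : ℕ} (hmn : m ≤ n) {a : R} (h : D^[m] a = 0) :
    D^[n] a = 0 := by
  obtain ⟨k, rfl⟩ := Nat.exists_eq_add_of_le' hmn
  rw [Function.iterate_add_apply, h, iterate_map_zero]

theorem iterate_derivation_mul_eq_single {m n : ℕ} {a b : R} (ha : D^[m + 1] a = 0)
    (hb : D^[n + 1] b = 0) :
    D^[m + n] (a * b) = (m + n).choose m * (D^[m] a * D^[n] b) := by
  rw [iterate_derivation_mul]
  refine Finset.sum_eq_single (m, n) (fun ⟨i, j⟩ hij hne => ?_) (by simp)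
  rw [Finset.HasAntidiagonal.mem_antidiagonal] at hij
  rcases lt_trichotomy i m with h | rfl | h
  · rw [iterate_eq_zero_of_le (by lia : n + 1 ≤ j) hb, mul_zero, mul_zero]
  · exact absurd (congrArg (Prod.mk i) (by lia)) hne
  · rw [iterate_eq_zero_of_le h ha, zero_mul, mul_zero]

theorem iterate_derivation_mul_eq_zero {m n : ℕ} {a b : R} (ha : D^[m] a = 0)
    (hb : D^[n] b = 0) : D^[m + n] (a * b) = 0 := by
  rw [iterate_derivation_mul]
  refine Finset.sum_eq_zero fun ⟨i, j⟩ hij => ?_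
  rw [Finset.HasAntidiagonal.mem_antidiagonal] at hij
  rcases lt_or_ge i m with h | h
  · rw [iterate_eq_zero_of_le (by lia : n ≤ j) hb, mul_zero, mul_zero]
  · rw [iterate_eq_zero_of_le h ha, zero_mul, mul_zero]

end Iterate

/-- The subring of the elements killed by some iterate of `D`: the largest subring on which `D`
is locally nilpotent. -/
def nilSub {k : Type*} [CommRing k] [Algebra k R] (D : Derivation k R R) : Subring R where
  carrier := {x | ∃ n : ℕ, D^[n] x = 0}
  one_mem' := ⟨1, D.map_one_eq_zero⟩
  zero_mem' := ⟨0, rfl⟩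
  neg_mem' := fun ⟨n, hx⟩ => ⟨n, by rw [iterate_map_neg, hx, neg_zero]⟩
  add_mem' := fun ⟨n, hx⟩ ⟨m, hy⟩ => ⟨max n m, by
    rw [iterate_map_add, iterate_eq_zero_of_le (le_max_left n m) hx,
      iterate_eq_zero_of_le (le_max_right n m) hy, add_zero]⟩
  mul_mem' := fun ⟨n, hx⟩ ⟨m, hy⟩ => ⟨n + m, iterate_derivation_mul_eq_zero hx hy⟩

variable {k : Type*} [CommRing k] [Algebra k R] {D : Derivation k R R}

theorem mem_nilSub_of_apply_mem {x : R} (h : D x ∈ nilSub D) : x ∈ nilSub D :=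
  let ⟨n, hn⟩ := h
  ⟨n + 1, hn⟩

theorem mem_nilSub_of_apply_eq_zero {x : R} (h : D x = 0) : x ∈ nilSub D :=
  ⟨1, h⟩

theorem isLND_iff_forall_mem_nilSub {D : Derivation ℤ R R} : IsLND D ↔ ∀ x, x ∈ nilSub D := by
  refine forall_congr' fun x => ⟨fun ⟨n, _, h⟩ => ⟨n, h⟩, fun ⟨n, h⟩ => ⟨n + 1, n.succ_pos, ?_⟩⟩
  exact iterate_eq_zero_of_le n.le_succ h

/-- `a` has degree `n` for the degree function of a locally nilpotent derivation `D`;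
the element `0` has no degree. -/
def HasNilDegree (D : Derivation k R R) (a : R) (n : ℕ) : Prop :=
  D^[n] a ≠ 0 ∧ D^[n + 1] a = 0

theorem exists_hasNilDegree {a : R} (ha : a ∈ nilSub D) (h0 : a ≠ 0) :
    ∃ n, HasNilDegree D a n := by
  classical
  obtain ⟨k, hk⟩ := Nat.exists_eq_succ_of_ne_zero
    fun h : Nat.find ha = 0 => h0 (by simpa [h] using Nat.find_spec ha)
  refine ⟨k, Nat.find_min ha (by lia), ?_⟩
  rw [← Nat.succ_eq_add_one, ← hk]
  exact Nat.find_spec ha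

theorem hasNilDegree_natCast [CharZero R] {N : ℕ} (hN : N ≠ 0) :
    HasNilDegree D (N : R) 0 :=
  ⟨Nat.cast_ne_zero.2 hN, D.map_natCast N⟩

namespace HasNilDegree

variable {a b : R} {m n : ℕ}

theorem unique (hm : HasNilDegree D a m) (hn : HasNilDegree D a n) : m = n := by
  rcases lt_trichotomy m n with h | h | h
  · exact absurd (iterate_eq_zero_of_le h hm.2) hn.1
  · exact h
  · exact absurd (iterate_eq_zero_of_le h hn.2) hm.1

theorem apply (hm : HasNilDegree D a (m + 1)) : HasNilDegree D (D a) m := hm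

theorem mul [IsDomain R] [CharZero R] (ha : HasNilDegree D a m) (hb : HasNilDegree D b n) :
    HasNilDegree D (a * b) (m + n) := by
  refine ⟨?_, ?_⟩
  · rw [iterate_derivation_mul_eq_single ha.2 hb.2]
    exact mul_ne_zero (Nat.cast_ne_zero.2 (Nat.choose_pos (m.le_add_right n)).ne')
      (mul_ne_zero ha.1 hb.1)
  · rw [Function.iterate_succ_apply', iterate_derivation_mul_eq_single ha.2 hb.2,
      Derivation.leibniz, Derivation.leibniz, D.map_natCast, ← Function.iterate_succ_apply' D,
      ← Function.iterate_succ_apply' D, ha.2, hb.2]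
    simp

theorem pow [IsDomain R] [CharZero R] (ha : HasNilDegree D a m) (k : ℕ) :
    HasNilDegree D (a ^ k) (k * m) := by
  induction k with
  | zero => simpa using hasNilDegree_natCast (D := D) one_ne_zero
  | succ k ih =>
    rw [pow_succ, Nat.succ_mul]
    exact ih.mul ha

end HasNilDegree

theorem apply_pow_self_pow {N : ℕ} (z : R) :
    D (z ^ (N + 1)) ^ (N + 1) =
      ((N + 1) ^ (N + 1) : ℕ) * (z ^ (N + 1)) ^ N * D z ^ (N + 1) := by
  rw [Derivation.leibniz_pow]
  simp only [Nat.add_sub_cancel, smul_eq_mul, nsmul_eq_mul, Nat.cast_pow]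
  ring

theorem mem_nilSub_of_forall_iterate_pow_mem [IsDomain R] [CharZero R] {N : ℕ} {z : R}
    (h : ∀ m, D^[m] z ^ (N + 1) ∈ nilSub D) : z ∈ nilSub D := by
  by_cases hz : z = 0
  · exact hz ▸ zero_mem _
  obtain ⟨k, hk⟩ := exists_hasNilDegree (h 0) (pow_ne_zero _ hz)
  -- From `z` to `D z`, the degree of the `(N + 1)`-st power drops by `N + 1`.
  induction k using Nat.strong_induction_on generalizing z with
  | _ k ih =>
  by_cases hDz : D z = 0
  · exact mem_nilSub_of_apply_eq_zero hDz
  refine mem_nilSub_of_apply_mem ?_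
  obtain ⟨l, hl⟩ := exists_hasNilDegree (h 1) (pow_ne_zero _ hDz)
  have hprod : HasNilDegree D (D (z ^ (N + 1)) ^ (N + 1)) (0 + N * k + l) := by
    rw [apply_pow_self_pow]
    exact ((hasNilDegree_natCast (by positivity)).mul (hk.pow N)).mul hl
  cases k with
  | zero =>
    have hzero : D (z ^ (N + 1)) = 0 := hk.2
    simpa [hzero] using hprod.1
  | succ j =>
    have hdeg := hprod.unique (hk.apply.pow (N + 1))
    exact ih l (by lia) (fun m => h (m + 1)) hDz hl

end LocallyNilpotent

section Transport

theorem NonRigid.of_surjective {k R S : Type*} [CommRing k] [CommRing R] [Algebra k R]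
    [CommRing S] {f : R →+* S} (hf : Function.Surjective f) {D : Derivation k R R}
    (hD : ∀ x, x ∈ nilSub D) (hker : ∀ x, f x = 0 → f (D x) = 0) {x : R} (hx : f (D x) ≠ 0) :
    NonRigid S := by
  let D' : Derivation ℤ S S :=
    (D.restrictScalars ℤ).liftOfSurjective (f := f.toIntAlgHom) hf hker
  have hD' : Function.Semiconj f D D' := fun y =>
    (Derivation.liftOfSurjective_apply (d := D.restrictScalars ℤ) (f := f.toIntAlgHom)
      hf hker y).symm
  refine ⟨D', isLND_iff_forall_mem_nilSub.2 fun y => ?_, fun h => hx ?_⟩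
  · obtain ⟨y, rfl⟩ := hf y
    obtain ⟨n, hy⟩ := hD y
    exact ⟨n, by rw [← (hD'.iterate_right n).eq, hy, map_zero]⟩
  · rw [hD'.eq, h, Derivation.zero_apply]

theorem NonRigid.congr {R S : Type*} [CommRing R] [CommRing S] (e : R ≃+* S)
    (h : NonRigid R) : NonRigid S := by
  obtain ⟨D, hD, hD0⟩ := h
  obtain ⟨x, hx⟩ := DFunLike.ne_iff.1 hD0
  exact .of_surjective (f := (e : R →+* S)) e.surjective
    (isLND_iff_forall_mem_nilSub.1 hD)
    (fun y hy => by simp [(map_eq_zero_iff e e.injective).1 hy])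
    (x := x) ((map_ne_zero_iff e e.injective).2 hx)

theorem nonRigid_of_stable {R : Type*} [CommRing R] {D : Derivation ℤ R R} {S : Subring R}
    (hS : ∀ x ∈ S, D x ∈ S) (hnil : S ≤ nilSub D) {x : R} (hxS : x ∈ S) (hx : D x ≠ 0) :
    NonRigid S := by
  let D' : Derivation ℤ S S := .mk'
    { toFun := fun x => ⟨D x, hS x x.2⟩
      map_add' := fun x y => Subtype.ext (map_add D (x : R) y)
      map_smul' := fun r x => Subtype.ext (D.map_smul_of_tower r (x : R)) }
    fun x y => Subtype.ext (D.leibniz (x : R) y)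
  have hD' : Function.Semiconj (Subtype.val : S → R) D' D := fun _ => rfl
  refine ⟨D', isLND_iff_forall_mem_nilSub.2 fun y => ?_, fun h => hx ?_⟩
  · obtain ⟨n, hn⟩ := hnil y.2
    exact ⟨n, Subtype.ext ((hD'.iterate_right n).eq y |>.trans hn)⟩
  · exact congrArg Subtype.val (DFunLike.congr_fun h ⟨x, hxS⟩)

end Transport

section AlgebraicExtension

open KaehlerDifferential in
theorem exists_derivation_extending_of_formallyEtale {k A B : Type*} [CommRing k] [CommRing A]
    [CommRing B] [Algebra k A] [Algebra k B] [Algebra A B] [IsScalarTower k A B]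
    [Algebra.FormallyEtale A B] (D : Derivation k A A) :
    ∃ E : Derivation k B B, ∀ a, E (algebraMap A B a) = algebraMap A B (D a) := by
  let D' : Derivation k A B := (Algebra.linearMap A B).compDer D
  refine ⟨((LinearMap.liftBaseChange B D'.liftKaehlerDifferential).comp
    (tensorKaehlerEquivOfFormallyEtale k A B).symm.toLinearMap).compDer
      (KaehlerDifferential.D k B), fun a => ?_⟩
  simp [tensorKaehlerEquivOfFormallyEtale_symm_D_algebraMap, D']

theorem formallyEtale_of_isAlgebraic (A K : Type*) [CommRing A] [IsDomain A] [Field K]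
    [CharZero K] [Algebra A K] [FaithfulSMul A K] [Algebra.IsAlgebraic A K] :
    Algebra.FormallyEtale A K := by
  let _ : Algebra (FractionRing A) K := FractionRing.liftAlgebra A K
  have : IsScalarTower A (FractionRing A) K := FractionRing.isScalarTower_liftAlgebra A K
  have : Algebra.IsAlgebraic (FractionRing A) K :=
    (IsFractionRing.comap_isAlgebraic_iff (A := A) (K := FractionRing A) (C := K)).1 inferInstance
  have : CharZero (FractionRing A) :=
    (algebraMap (FractionRing A) K).charZero
  have : Algebra.FormallyEtale (FractionRing A) K := .of_isSeparable _ _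
  have : Algebra.FormallyEtale A (FractionRing A) := .of_isLocalization (nonZeroDivisors A)
  exact .comp A (FractionRing A) K

variable {K : Type*} [Field K] {E : Derivation ℤ K K}

theorem apply_mem_subfield_closure {s : Set K} (hs : ∀ x ∈ s, E x ∈ Subfield.closure s) {x : K}
    (hx : x ∈ Subfield.closure s) : E x ∈ Subfield.closure s := by
  induction hx using Subfield.closure_induction with
  | mem x hx => exact hs x hx
  | one => simp
  | add x y _ _ hx hy => rw [map_add]; exact add_mem hx hy
  | neg x _ hx => rw [map_neg]; exact neg_mem hx
  | inv x hxs hx =>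
    rw [Derivation.leibniz_inv]
    exact mul_mem (neg_mem (pow_mem (inv_mem hxs) 2)) hx
  | mul x y hxs hys hx hy =>
    rw [Derivation.leibniz]
    exact add_mem (mul_mem hxs hy) (mul_mem hys hx)

theorem apply_div_mem_of_pow_mem [CharZero K] {F : Subfield K} (hF : ∀ x ∈ F, E x ∈ F) {N : ℕ}
    {c z : K} (hc : c ≠ 0) (hcN : c ^ (N + 1) ∈ F) (hz : z / c ∈ F) : E z / c ∈ F := by
  have hlog : E c / c = E (c ^ (N + 1)) / ((N + 1 : ℕ) * c ^ (N + 1)) := by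
    rw [Derivation.leibniz_pow]
    simp only [Nat.add_sub_cancel, smul_eq_mul, nsmul_eq_mul]
    field_simp
    ring
  have hEz : E z / c = E (z / c) + z / c * (E c / c) := by
    rw [Derivation.leibniz_div]
    simp only [smul_eq_mul]
    field_simp
    ring
  rw [hEz, hlog]
  exact add_mem (hF _ hz) (mul_mem hz (div_mem (hF _ hcN) (mul_mem (natCast_mem F _) hcN)))

variable {A C : Subring K} {M : Set K} {N : ℕ}

theorem apply_mem_of_apply_generators_mem (hM : C.toAddSubgroup = AddSubgroup.closure M)
    (hE : ∀ c ∈ M, E c ∈ C) : ∀ x ∈ C, E x ∈ C := by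
  intro x hx
  rw [← Subring.mem_toAddSubgroup, hM] at hx
  induction hx using AddSubgroup.closure_induction with
  | mem x hx => exact hE x hx
  | zero => simp
  | add x y _ _ hx hy => rw [map_add]; exact add_mem hx hy
  | neg x _ hx => rw [map_neg]; exact neg_mem hx

theorem mem_nilSub_of_pow_mem [CharZero K] (hA : ∀ x ∈ A, E x ∈ A) (hAnil : A ≤ nilSub E)
    (hC : ∀ x ∈ C, E x ∈ C) (hsat : ∀ x ∈ C, x ∈ Subfield.closure (A : Set K) → x ∈ A)
    {c : K} (hcC : c ∈ C) (hcN : c ^ (N + 1) ∈ A) : c ∈ nilSub E := by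
  by_cases hc : c = 0
  · exact hc ▸ zero_mem _
  let F := Subfield.closure (A : Set K)
  have hAF : ∀ x ∈ A, x ∈ F := fun _ hx => Subfield.subset_closure hx
  have hF : ∀ x ∈ F, E x ∈ F := fun _ =>
    apply_mem_subfield_closure fun x hx => hAF _ (hA x hx)
  have hiterC : ∀ m, E^[m] c ∈ C := fun m => by
    induction m with
    | zero => exact hcC
    | succ m ih => rw [Function.iterate_succ_apply']; exact hC _ ih
  have hiterF : ∀ m, E^[m] c / c ∈ F := fun m => by
    induction m with
    | zero => simp [hc]
    | succ m ih =>
      rw [Function.iterate_succ_apply']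
      exact apply_div_mem_of_pow_mem hF hc (hAF _ hcN) ih
  refine mem_nilSub_of_forall_iterate_pow_mem (N := N) fun m => hAnil ?_
  refine hsat _ (pow_mem (hiterC m) _) ?_
  rw [← div_mul_cancel₀ (E^[m] c) hc, mul_pow]
  exact mul_mem (pow_mem (hiterF m) _) (hAF _ hcN)

theorem NonRigid.of_le [CharZero K] [Algebra.IsAlgebraic A K] (hAC : A ≤ C)
    (hM : C.toAddSubgroup = AddSubgroup.closure M) (hMN : ∀ c ∈ M, c ^ (N + 1) ∈ A)
    (hsat : ∀ x ∈ C, x ∈ Subfield.closure (A : Set K) → x ∈ A)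
    (hext : ∀ E : Derivation ℤ K K, (∀ x ∈ A, E x ∈ A) → ∀ c ∈ M, E c ∈ C)
    (h : NonRigid A) : NonRigid C := by
  obtain ⟨D, hD, hD0⟩ := h
  have := formallyEtale_of_isAlgebraic A K
  obtain ⟨E, hE⟩ := exists_derivation_extending_of_formallyEtale (B := K) D
  have hsemi : Function.Semiconj (Subtype.val : A → K) D E := fun a => (hE a).symm
  have hA : ∀ x ∈ A, E x ∈ A := fun x hx => hsemi.eq ⟨x, hx⟩ ▸ (D ⟨x, hx⟩).2
  have hAnil : A ≤ nilSub E := fun x hx =>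
    let ⟨n, _, hn⟩ := hD ⟨x, hx⟩
    ⟨n, by rw [← (hsemi.iterate_right n).eq ⟨x, hx⟩, hn, ZeroMemClass.coe_zero]⟩
  have hC : ∀ x ∈ C, E x ∈ C := apply_mem_of_apply_generators_mem hM (hext E hA)
  have hMC : M ⊆ C := by
    rw [← Subring.coe_toAddSubgroup, hM]; exact AddSubgroup.subset_closure
  have hCnil : C.toAddSubgroup ≤ (nilSub E).toAddSubgroup := by
    rw [hM, AddSubgroup.closure_le]
    exact fun c hc => mem_nilSub_of_pow_mem hA hAnil hC hsat (hMC hc) (hMN c hc)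
  obtain ⟨a, ha⟩ := DFunLike.ne_iff.1 hD0
  refine nonRigid_of_stable hC hCnil (hAC a.2) ?_
  rw [← hsemi.eq]
  exact fun h0 => ha (Subtype.ext h0)

end AlgebraicExtension

section Divisibility

open Polynomial in
theorem irreducible_X_pow_add_C {R : Type*} [CommRing R] [IsDomain R] {π q : R} (hπ : Prime π)
    (hq : π ∣ q) (hq2 : ¬ π ^ 2 ∣ q) {m : ℕ} (hm : m ≠ 0) : Irreducible (X ^ m + C q) := by
  have hmon : (X ^ m + C q).Monic := monic_X_pow_add_C q hm
  have hspan : (Ideal.span {π}).IsPrime := (Ideal.span_singleton_prime hπ.ne_zero).2 hπ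
  refine irreducible_of_eisenstein_criterion hspan ?_ (fun j hj => ?_) ?_ ?_ hmon.isPrimitive
  · rw [hmon.leadingCoeff]
    exact hspan.one_notMem
  · rw [degree_X_pow_add_C hm.pos, Nat.cast_lt] at hj
    rw [coeff_add, coeff_X_pow, if_neg hj.ne, zero_add, coeff_C]
    split_ifs
    · exact Ideal.mem_span_singleton.2 hq
    · exact zero_mem _
  · rw [degree_X_pow_add_C hm.pos]
    exact_mod_cast hm.pos
  · rwa [coeff_add, coeff_X_pow, if_neg hm.symm, zero_add, coeff_C_zero,
      Ideal.span_singleton_pow, Ideal.mem_span_singleton]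

theorem dvd_of_dvd_mul_of_span_pair_isPrime {R : Type*} [CommRing R] [IsDomain R] {x y p : R}
    (hx : Prime x) (hxy : ¬ x ∣ y) (hspan : (Ideal.span {x, y}).IsPrime)
    (hp : p ∉ Ideal.span {x, y}) {b : R ⧸ Ideal.span {p}}
    (h : Ideal.Quotient.mk (Ideal.span {p}) x ∣ Ideal.Quotient.mk (Ideal.span {p}) y * b) :
    Ideal.Quotient.mk (Ideal.span {p}) x ∣ b := by
  obtain ⟨f, rfl⟩ := Ideal.Quotient.mk_surjective b
  obtain ⟨c, hc⟩ := h
  obtain ⟨g, rfl⟩ := Ideal.Quotient.mk_surjective c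
  rw [← map_mul, ← map_mul, Ideal.Quotient.mk_eq_mk_iff_sub_mem,
    Ideal.mem_span_singleton'] at hc
  obtain ⟨r, hr⟩ := hc
  have hrp : r * p ∈ Ideal.span {x, y} :=
    Ideal.mem_span_pair.2 ⟨-g, f, by linear_combination -hr⟩
  obtain ⟨u, v, huv⟩ := Ideal.mem_span_pair.1 ((hspan.mem_or_mem hrp).resolve_right hp)
  have hdvd : x ∣ y * (f - v * p) := ⟨u * p + g, by linear_combination -hr - p * huv⟩
  obtain ⟨w, hw⟩ := (hx.dvd_or_dvd hdvd).resolve_left hxy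
  refine ⟨Ideal.Quotient.mk _ w, ?_⟩
  rw [← map_mul, Ideal.Quotient.mk_eq_mk_iff_sub_mem, Ideal.mem_span_singleton']
  exact ⟨v, by linear_combination -hw⟩

end Divisibility

section VariableIdeals

open MvPolynomial

variable {σ R : Type*} [CommRing R]

open Classical in
theorem span_X_image_eq_ker (s : Set σ) :
    Ideal.span (X '' s) =
      RingHom.ker (aeval fun i => if i ∈ s then 0 else X i :
        MvPolynomial σ R →ₐ[R] MvPolynomial σ R) := by
  set φ : MvPolynomial σ R →ₐ[R] MvPolynomial σ R := aeval fun i => if i ∈ s then 0 else X i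
    with hφ
  refine le_antisymm (Ideal.span_le.2 ?_) fun p hp => ?_
  · rintro _ ⟨i, hi, rfl⟩
    simp [hφ, hi]
  · have hcomp : (Ideal.Quotient.mkₐ R (Ideal.span (X '' s))).comp φ = Ideal.Quotient.mkₐ R _ := by
      ext i
      by_cases hi : i ∈ s
      · simpa [hφ, hi, eq_comm] using
          Ideal.Quotient.eq_zero_iff_mem.2 (Ideal.subset_span (Set.mem_image_of_mem X hi))
      · simp [hφ, hi]
    rw [← Ideal.Quotient.eq_zero_iff_mem, ← Ideal.Quotient.mkₐ_eq_mk R, ← hcomp,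
      AlgHom.comp_apply, (RingHom.mem_ker).1 hp, map_zero]

theorem span_X_image_isPrime [IsDomain R] (s : Set σ) :
    (Ideal.span (X '' s) : Ideal (MvPolynomial σ R)).IsPrime := by
  rw [span_X_image_eq_ker]
  exact RingHom.ker_isPrime _

end VariableIdeals

section PhamBrieskornPolynomial

open MvPolynomial

variable (k : Type*) [Field k] {n : ℕ} (a : Fin n → ℕ)

/-- The Pham–Brieskorn polynomial `X₁ ^ a₁ + ⋯ + Xₙ ^ aₙ`, whose principal ideal defines
`PBring k a`. -/
def PBpoly : MvPolynomial (Fin n) k := ∑ i, X i ^ a i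

/-- The quotient map from the polynomial ring onto the Pham–Brieskorn ring. -/
def PBmk : MvPolynomial (Fin n) k →+* PBring k a := Ideal.Quotient.mk (Ideal.span {PBpoly k a})

theorem PBmk_surjective : Function.Surjective (PBmk k a) := Ideal.Quotient.mk_surjective

variable {k a}

theorem PBmk_eq_zero_iff {p : MvPolynomial (Fin n) k} : PBmk k a p = 0 ↔ PBpoly k a ∣ p :=
  Ideal.Quotient.eq_zero_iff_dvd _ _

theorem eval_single_PBpoly (ha : ∀ i, 0 < a i) (j : Fin n) (c : k) :
    eval (Pi.single j c) (PBpoly k a) = c ^ a j := by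
  rw [PBpoly, map_sum, Fintype.sum_eq_single j]
  · simp
  · intro i hi
    simp [Pi.single_eq_of_ne hi, (ha i).ne']

theorem pderiv_PBpoly (i : Fin n) :
    pderiv i (PBpoly k a) = C (a i : k) * X i ^ (a i - 1) := by
  rw [PBpoly, map_sum, Fintype.sum_eq_single i]
  · simp
  · intro j hj
    simp [pderiv_X_of_ne hj]

theorem PBpoly_notMem_span_X_image (ha : ∀ i, 0 < a i) {s : Set (Fin n)} (hs : s ≠ Set.univ) :
    PBpoly k a ∉ Ideal.span (X '' s) := by
  obtain ⟨j, hj⟩ := (Set.ne_univ_iff_exists_notMem s).1 hs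
  have hker : Ideal.span (X '' s) ≤ RingHom.ker (eval (Pi.single j (1 : k))) := by
    rw [Ideal.span_le]
    rintro _ ⟨i, hi, rfl⟩
    simp [Pi.single_eq_of_ne (ne_of_mem_of_not_mem hi hj)]
  intro h
  have := hker h
  rw [RingHom.mem_ker, eval_single_PBpoly ha, one_pow] at this
  exact one_ne_zero this

theorem X_not_dvd_PBpoly (hn : 2 ≤ n) (ha : ∀ i, 0 < a i) (i : Fin n) :
    ¬ X i ∣ PBpoly k a := by
  have : Nontrivial (Fin n) := Fin.nontrivial_iff_two_le.2 hn
  simpa [Ideal.mem_span_singleton] using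
    PBpoly_notMem_span_X_image (k := k) ha (Set.singleton_ne_univ i)

theorem sq_not_dvd_PBpoly [CharZero k] (hn : 2 ≤ n) (ha : ∀ i, 0 < a i)
    {π : MvPolynomial (Fin n) k} (hπ : Prime π) : ¬ π ^ 2 ∣ PBpoly k a := by
  intro h
  let i : Fin n := ⟨0, by lia⟩
  have hpd : π ∣ C (a i : k) * X i ^ (a i - 1) := by
    rw [← pderiv_PBpoly]
    obtain ⟨q, hq⟩ := h
    exact ⟨2 * pderiv i π * q + π * pderiv i q, by rw [hq]; simp; ring⟩
  have hC : IsUnit (C (a i : k) : MvPolynomial (Fin n) k) :=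
    (isUnit_iff_ne_zero.2 (Nat.cast_ne_zero.2 (ha i).ne')).map C
  have hX : π ∣ X i := hπ.dvd_of_dvd_pow ((IsUnit.dvd_mul_left hC).1 hpd)
  have hXπ : X i ∣ π := ((hπ.dvd_prime_iff_associated X_prime).1 hX).symm.dvd
  exact X_not_dvd_PBpoly hn ha i ((hXπ.trans (dvd_pow_self π two_ne_zero)).trans h)

theorem exists_prime_dvd_PBpoly (hn : 0 < n) (ha : ∀ i, 0 < a i) :
    ∃ π, Prime π ∧ π ∣ PBpoly k a := by
  let j : Fin n := ⟨0, hn⟩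
  have h0 : PBpoly k a ≠ 0 := fun h => by
    simpa [h] using eval_single_PBpoly (k := k) ha j 1
  have hunit : ¬ IsUnit (PBpoly k a) := fun h => by
    have h0 := h.map (eval (Pi.single j (0 : k)))
    rw [eval_single_PBpoly ha, zero_pow (ha j).ne'] at h0
    exact not_isUnit_zero h0
  obtain ⟨π, hπ, hdvd⟩ := WfDvdMonoid.exists_irreducible_factor hunit h0
  exact ⟨π, hπ.prime, hdvd⟩

theorem PBpoly_prime [CharZero k] (hn : 3 ≤ n) (ha : ∀ i, 0 < a i) : Prime (PBpoly k a) := by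
  obtain ⟨m, rfl⟩ := Nat.exists_eq_add_of_le' (by lia : 1 ≤ n)
  have hsucc : finSuccEquiv k m (PBpoly k a) =
      Polynomial.X ^ a 0 + Polynomial.C (PBpoly k fun j => a j.succ) := by
    simp [PBpoly, Fin.sum_univ_succ, finSuccEquiv_X_zero, finSuccEquiv_X_succ]
  have ha' : ∀ j : Fin m, 0 < a j.succ := fun j => ha _
  obtain ⟨π, hπ, hdvd⟩ := exists_prime_dvd_PBpoly (k := k) (by lia) ha'
  rw [← irreducible_iff_prime, ← MulEquiv.irreducible_iff (finSuccEquiv k m), hsucc]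
  exact irreducible_X_pow_add_C hπ hdvd (sq_not_dvd_PBpoly (by lia) ha' hπ) (ha 0).ne'

theorem PBring_isDomain [CharZero k] (hn : 3 ≤ n) (ha : ∀ i, 0 < a i) : IsDomain (PBring k a) := by
  have hprime := PBpoly_prime (k := k) hn ha
  have := (Ideal.span_singleton_prime hprime.ne_zero).2 hprime
  exact Ideal.Quotient.isDomain (Ideal.span {PBpoly k a})

theorem PBmk_X_ne_zero [CharZero k] (hn : 3 ≤ n) (ha : ∀ i, 0 < a i) (i : Fin n) :
    PBmk k a (X i) ≠ 0 := by
  rw [Ne, PBmk_eq_zero_iff, (PBpoly_prime hn ha).dvd_prime_iff_associated X_prime]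
  exact fun h => X_not_dvd_PBpoly (by lia) ha i h.symm.dvd

theorem dvd_of_PBmk_X_dvd_mul (hn : 3 ≤ n) (ha : ∀ i, 0 < a i) {i j : Fin n} (hij : i ≠ j)
    {b : PBring k a} (h : PBmk k a (X i) ∣ PBmk k a (X j) * b) : PBmk k a (X i) ∣ b := by
  have hspan : (X '' {i, j} : Set (MvPolynomial (Fin n) k)) = {X i, X j} := Set.image_pair X i j
  have hne : ({i, j} : Set (Fin n)) ≠ Set.univ := fun h => by
    have := Set.ncard_pair hij
    rw [h, Set.ncard_univ, Nat.card_eq_fintype_card, Fintype.card_fin] at this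
    lia
  refine dvd_of_dvd_mul_of_span_pair_isPrime X_prime (fun h => hij (X_dvd_X.1 h)) ?_ ?_ h
  · rw [← hspan]
    exact span_X_image_isPrime _
  · rw [← hspan]
    exact PBpoly_notMem_span_X_image ha hne

end PhamBrieskornPolynomial

section RegularMod

variable {R : Type*} [CommRing R]

/-- The multiplicative monoid of elements of `R` that are not zero divisors modulo `u`. -/
def regularMod (u : R) : Submonoid R where
  carrier := {v | ∀ b, u ∣ v * b → u ∣ b}
  one_mem' b h := by rwa [one_mul] at h
  mul_mem' hv hw b h := hw b (hv _ (by rwa [← mul_assoc]))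

variable {K : Type*} [Field K] [Algebra R K] [FaithfulSMul R K]

theorem mem_range_algebraMap_of_mem_regularMod {u v : R} (hu : u ≠ 0) (hv : v ∈ regularMod u)
    {z : K} (huz : algebraMap R K u * z ∈ (algebraMap R K).range)
    (hvz : algebraMap R K v * z ∈ (algebraMap R K).range) : z ∈ (algebraMap R K).range := by
  have hinj := FaithfulSMul.algebraMap_injective R K
  obtain ⟨b, hb⟩ := huz
  obtain ⟨c, hc⟩ := hvz
  have hvb : v * b = u * c := hinj (by rw [map_mul, map_mul, hb, hc, mul_left_comm])
  obtain ⟨w, rfl⟩ := hv b ⟨c, hvb⟩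
  refine ⟨w, mul_left_cancel₀ ((map_ne_zero_iff _ hinj).2 hu) ?_⟩
  rw [← map_mul, hb]

theorem mem_range_algebraMap_of_mem_closure {ι : Type*} {x : ι → R} (hx : ∀ i, x i ≠ 0) {z : K}
    (hreg : ∀ i, ∃ v ∈ regularMod (x i), algebraMap R K v * z ∈ (algebraMap R K).range)
    {u : R} (hu : u ∈ Submonoid.closure (Set.range x))
    (huz : algebraMap R K u * z ∈ (algebraMap R K).range) : z ∈ (algebraMap R K).range := by
  induction hu using Submonoid.closure_induction_left with
  | one => simpa only [map_one, one_mul] using huz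
  | mul_left _ hxi y _ ih =>
    obtain ⟨i, rfl⟩ := hxi
    obtain ⟨v, hv, hvz⟩ := hreg i
    refine ih (mem_range_algebraMap_of_mem_regularMod (hx i) hv ?_ ?_)
    · rwa [← mul_assoc, ← map_mul]
    · rw [mul_left_comm]
      exact Subring.mul_mem _ ⟨y, rfl⟩ hvz

end RegularMod

section Veronese

open MvPolynomial

section WeightedComponent

variable {R σ M : Type*} [CommSemiring R] [AddCancelCommMonoid M] {w : σ → M}
  {f : MvPolynomial σ R} {i : M}

open Classical in
theorem weightedHomogeneousComponent_mul_of_left (hf : IsWeightedHomogeneous w f i)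
    (p : MvPolynomial σ R) (j : M) :
    weightedHomogeneousComponent w (i + j) (f * p) = f * weightedHomogeneousComponent w j p := by
  let := weightedGradedAlgebra R w
  simp only [← weightedDecomposition.decompose'_apply]
  exact DirectSum.coe_decompose_mul_add_of_left_mem (weightedHomogeneousSubmodule R w) hf

theorem weightedHomogeneousComponent_zero_mul_of_left (hf : IsWeightedHomogeneous w f 0)
    (p : MvPolynomial σ R) :
    weightedHomogeneousComponent w 0 (f * p) = f * weightedHomogeneousComponent w 0 p := by
  simpa using weightedHomogeneousComponent_mul_of_left hf p 0

end WeightedComponent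

variable (k : Type*) [Field k] {n : ℕ} (a : Fin n → ℕ)

/-- The weighted degree of the monomial with exponent vector `s`, for the grading in which `X i`
has degree `L / aᵢ`. -/
def monomialDeg (s : Fin n →₀ ℕ) : ℕ := Finsupp.weight (fun i => Ltot a / a i) s

/-- The weights `L / aᵢ` modulo `d`. -/
def modWeight (d : ℕ) (i : Fin n) : ZMod d := (Ltot a / a i : ℕ)

theorem monomialDeg_eq_sum (s : Fin n →₀ ℕ) : monomialDeg a s = ∑ i, s i * (Ltot a / a i) := by
  simp [monomialDeg, Finsupp.weight_apply, Finsupp.sum_fintype]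

theorem monomialDeg_add (s t : Fin n →₀ ℕ) :
    monomialDeg a (s + t) = monomialDeg a s + monomialDeg a t :=
  map_add _ s t

theorem monomialDeg_nsmul (m : ℕ) (s : Fin n →₀ ℕ) : monomialDeg a (m • s) = m * monomialDeg a s :=
  map_nsmul (Finsupp.weight _) m s

theorem dvd_Ltot (i : Fin n) : a i ∣ Ltot a := Finset.dvd_lcm (Finset.mem_univ i)

variable {a}

theorem weight_modWeight (d : ℕ) (s : Fin n →₀ ℕ) :
    Finsupp.weight (modWeight a d) s = (monomialDeg a s : ZMod d) := by
  simp [monomialDeg_eq_sum, modWeight, Finsupp.weight_apply, Finsupp.sum_fintype]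

variable (a) (d : ℕ)

/-- The subring of polynomials all of whose monomials have weighted degree divisible by `d`,
encoded as the degree-zero part for the weights modulo `d`. -/
def verPoly : Subring (MvPolynomial (Fin n) k) where
  carrier := {p | IsWeightedHomogeneous (modWeight a d) p 0}
  zero_mem' := isWeightedHomogeneous_zero k _ 0
  one_mem' := isWeightedHomogeneous_one k _
  add_mem' hp hq := hp.add hq
  mul_mem' hp hq := by simpa using IsWeightedHomogeneous.mul hp hq
  neg_mem' hp := IsWeightedHomogeneous.neg hp

variable {k a d}

theorem mem_verPoly_iff {p : MvPolynomial (Fin n) k} :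
    p ∈ verPoly k a d ↔ ∀ s, coeff s p ≠ 0 → d ∣ monomialDeg a s := by
  simp only [← ZMod.natCast_eq_zero_iff, ← weight_modWeight]
  rfl

theorem weightedHomogeneousComponent_of_mem_verPoly {p : MvPolynomial (Fin n) k}
    (hp : p ∈ verPoly k a d) : weightedHomogeneousComponent (modWeight a d) 0 p = p :=
  IsWeightedHomogeneous.weightedHomogeneousComponent_same hp

variable (k a d) in
theorem isWeightedHomogeneous_PBpoly :
    IsWeightedHomogeneous (modWeight a d) (PBpoly k a) (Ltot a : ZMod d) := by
  refine IsWeightedHomogeneous.sum _ _ _ fun i _ => ?_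
  have hi : a i • modWeight a d i = (Ltot a : ZMod d) := by
    rw [modWeight, nsmul_eq_mul, ← Nat.cast_mul, Nat.mul_div_cancel' (dvd_Ltot a i)]
  exact hi ▸ (isWeightedHomogeneous_X k (modWeight a d) i).pow (a i)

theorem weightedHomogeneousComponent_PBpoly_mul (t : MvPolynomial (Fin n) k) (j : ZMod d) :
    weightedHomogeneousComponent (modWeight a d) j (PBpoly k a * t) =
      PBpoly k a * weightedHomogeneousComponent (modWeight a d) (j - Ltot a) t := by
  simpa using weightedHomogeneousComponent_mul_of_left (isWeightedHomogeneous_PBpoly k a d) t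
    (j - Ltot a)

theorem PBmk_weightedHomogeneousComponent_eq_zero {p : MvPolynomial (Fin n) k}
    (hp : PBmk k a p = 0) (j : ZMod d) :
    PBmk k a (weightedHomogeneousComponent (modWeight a d) j p) = 0 := by
  obtain ⟨t, rfl⟩ := PBmk_eq_zero_iff.1 hp
  rw [weightedHomogeneousComponent_PBpoly_mul]
  exact PBmk_eq_zero_iff.2 (dvd_mul_right _ _)

theorem PBmk_monomial_mem_verZ {s : Fin n →₀ ℕ} (hs : d ∣ monomialDeg a s) (c : k) :
    PBmk k a (monomial s c) ∈ verZ (PBpiece k a) d := by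
  refine Subring.subset_closure (Set.mem_biUnion (x := (monomialDeg a s : ℤ)) ?_ ?_)
  · exact Int.mem_zmultiples_iff.2 (Int.natCast_dvd_natCast.2 hs)
  · rw [SetLike.mem_coe, PBpiece, if_pos (Int.natCast_nonneg _)]
    exact ⟨monomial s c, isWeightedHomogeneous_monomial _ _ _ (Int.toNat_natCast _).symm, rfl⟩

theorem exists_mem_verPoly_of_mem_PBpiece {m : ℤ} (hm : (d : ℤ) ∣ m) {x : PBring k a}
    (hx : x ∈ PBpiece k a m) : ∃ p ∈ verPoly k a d, PBmk k a p = x := by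
  rw [PBpiece] at hx
  split_ifs at hx with h0
  · obtain ⟨p, hp, rfl⟩ := hx
    refine ⟨p, mem_verPoly_iff.2 fun s hs => ?_, rfl⟩
    have hdeg : monomialDeg a s = m.toNat := hp hs
    rwa [← Int.natCast_dvd_natCast, hdeg, Int.toNat_of_nonneg h0]
  · exact ⟨0, zero_mem _, by rw [map_zero, AddSubgroup.mem_bot.1 hx]⟩

variable (k a d) in
theorem verZ_PBpiece_eq_map : verZ (PBpiece k a) d = (verPoly k a d).map (PBmk k a) := by
  refine le_antisymm (Subring.closure_le.2 (Set.iUnion₂_subset fun m hm x hx => ?_)) ?_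
  · exact exists_mem_verPoly_of_mem_PBpiece (Int.mem_zmultiples_iff.1 hm) hx
  · rintro _ ⟨p, hp, rfl⟩
    rw [p.as_sum, map_sum]
    exact Subring.sum_mem _ fun s hs =>
      PBmk_monomial_mem_verZ (mem_verPoly_iff.1 hp s (mem_support_iff.1 hs)) _

variable (k a d) in
/-- The images in `PBring k a` of the terms of weighted degree divisible by `d`. -/
def verMonomials : Set (PBring k a) :=
  {x | ∃ s c, d ∣ monomialDeg a s ∧ PBmk k a (monomial s c) = x}

variable (k a d) in
theorem verZ_toAddSubgroup :
    (verZ (PBpiece k a) d).toAddSubgroup = AddSubgroup.closure (verMonomials k a d) := by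
  refine le_antisymm (fun x hx => ?_) ((AddSubgroup.closure_le _).2 ?_)
  · rw [Subring.mem_toAddSubgroup, verZ_PBpiece_eq_map] at hx
    obtain ⟨p, hp, rfl⟩ := hx
    rw [p.as_sum, map_sum]
    exact AddSubgroup.sum_mem _ fun s hs => AddSubgroup.subset_closure
      ⟨s, _, mem_verPoly_iff.1 hp s (mem_support_iff.1 hs), rfl⟩
  · rintro _ ⟨s, c, hs, rfl⟩
    exact PBmk_monomial_mem_verZ hs c

theorem verZ_PBpiece_le_of_dvd {g : ℕ} (h : g ∣ d) :
    verZ (PBpiece k a) d ≤ verZ (PBpiece k a) g := by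
  change (verZ (PBpiece k a) d).toAddSubgroup ≤ (verZ (PBpiece k a) g).toAddSubgroup
  rw [verZ_toAddSubgroup, verZ_toAddSubgroup]
  exact AddSubgroup.closure_mono fun _ ⟨s, c, hs, hx⟩ => ⟨s, c, h.trans hs, hx⟩

theorem mem_verZ_of_mul_mem [IsDomain (PBring k a)] {x z : PBring k a} (hx0 : x ≠ 0)
    (hx : x ∈ verZ (PBpiece k a) d) (hxz : x * z ∈ verZ (PBpiece k a) d) :
    z ∈ verZ (PBpiece k a) d := by
  rw [verZ_PBpiece_eq_map] at hx hxz ⊢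
  obtain ⟨p, hp, rfl⟩ := hx
  obtain ⟨q, rfl⟩ := PBmk_surjective k a z
  obtain ⟨r, hr, hrpq⟩ := hxz
  refine ⟨weightedHomogeneousComponent (modWeight a d) 0 q,
    weightedHomogeneousComponent_mem _ _ _, mul_left_cancel₀ hx0 ?_⟩
  have hcomp := PBmk_weightedHomogeneousComponent_eq_zero (d := d) (p := p * q - r)
    (by rw [map_sub, map_mul, hrpq, sub_self]) 0
  rw [map_sub, weightedHomogeneousComponent_zero_mul_of_left hp,
    weightedHomogeneousComponent_of_mem_verPoly hr, map_sub, map_mul, hrpq, sub_eq_zero] at hcomp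
  exact hcomp

variable (k a d) in
theorem PBmk_monomial_pow_mem_verZ (s : Fin n →₀ ℕ) (c : k) :
    PBmk k a (monomial s c) ^ d ∈ verZ (PBpiece k a) d := by
  rw [← map_pow, monomial_pow]
  exact PBmk_monomial_mem_verZ (monomialDeg_nsmul a d s ▸ dvd_mul_right _ _) _

variable (k a) in
theorem isIntegral_verZ (hd : 0 < d) :
    Algebra.IsIntegral (verZ (PBpiece k a) d) (PBring k a) := by
  refine ⟨fun x => ?_⟩
  obtain ⟨p, rfl⟩ := PBmk_surjective k a x
  rw [p.as_sum, map_sum]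
  refine IsIntegral.sum _ fun s _ => IsIntegral.of_pow hd ?_
  exact isIntegral_algebraMap
    (x := (⟨_, PBmk_monomial_pow_mem_verZ k a d s _⟩ : verZ (PBpiece k a) d))

end Veronese

section CofactorArithmetic

theorem dvd_prod_gcd_of_dvd_prod {ι : Type*} (s : Finset ι) {f : ι → ℕ} {g : ℕ}
    (hg : g ∣ ∏ i ∈ s, f i) : g ∣ ∏ i ∈ s, g.gcd (f i) := by
  classical
  have hgcd : g.gcd (∏ i ∈ s, f i) ∣ ∏ i ∈ s, g.gcd (f i) := by
    clear hg
    induction s using Finset.induction_on with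
    | empty => simp
    | insert i s hi ih =>
      rw [Finset.prod_insert hi, Finset.prod_insert hi]
      exact (Nat.gcd_mul_right_dvd_mul_gcd _ _ _).trans (Nat.mul_dvd_mul_left _ ih)
  rwa [Nat.gcd_eq_left hg] at hgcd

theorem dvd_iff_forall_gcd_dvd {ι : Type*} [Fintype ι] {f : ι → ℕ}
    (hf : Pairwise fun i j => (f i).Coprime (f j)) {g : ℕ} (hg : g ∣ ∏ i, f i) (t : ℕ) :
    g ∣ t ↔ ∀ i, g.gcd (f i) ∣ t := by
  refine ⟨fun h i => (Nat.gcd_dvd_left _ _).trans h, fun h => ?_⟩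
  refine (dvd_prod_gcd_of_dvd_prod Finset.univ hg).trans
    (Finset.prod_dvd_of_isRelPrime (fun i _ j _ hij => ?_) fun i _ => h i)
  exact Nat.coprime_iff_isRelPrime.1
    ((hf hij).of_dvd (Nat.gcd_dvd_right _ _) (Nat.gcd_dvd_right _ _))

variable {n : ℕ} {a : Fin n → ℕ}

variable (a) in
/-- The cofactor `L / Lᵢ`. -/
def ell (i : Fin n) : ℕ := Ltot a / Lpart a i

theorem dvd_Lpart {i j : Fin n} (h : j ≠ i) : a j ∣ Lpart a i :=
  Finset.dvd_lcm (Finset.mem_erase.2 ⟨h, Finset.mem_univ j⟩)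

variable (a) in
theorem Lpart_dvd_Ltot (i : Fin n) : Lpart a i ∣ Ltot a :=
  Finset.lcm_mono (Finset.erase_subset i _)

variable (a) in
theorem Ltot_eq_lcm (i : Fin n) : Ltot a = (a i).lcm (Lpart a i) := by
  rw [Ltot, ← Finset.insert_erase (Finset.mem_univ i), Finset.lcm_insert]
  rfl

variable (a) in
theorem ell_mul_Lpart (i : Fin n) : ell a i * Lpart a i = Ltot a :=
  Nat.div_mul_cancel (Lpart_dvd_Ltot a i)

theorem Ltot_pos (ha : ∀ i, 0 < a i) : 0 < Ltot a :=
  Nat.pos_of_ne_zero (Finset.lcm_ne_zero_iff.2 fun i _ => (ha i).ne')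

theorem Lpart_pos (ha : ∀ i, 0 < a i) (i : Fin n) : 0 < Lpart a i :=
  Nat.pos_of_dvd_of_pos (Lpart_dvd_Ltot a i) (Ltot_pos ha)

theorem ell_pos (ha : ∀ i, 0 < a i) (i : Fin n) : 0 < ell a i :=
  Nat.div_pos (Nat.le_of_dvd (Ltot_pos ha) (Lpart_dvd_Ltot a i)) (Lpart_pos ha i)

theorem gcd_mul_ell (ha : ∀ i, 0 < a i) (i : Fin n) :
    (a i).gcd (Lpart a i) * ell a i = a i := by
  have h := Nat.gcd_mul_lcm (a i) (Lpart a i)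
  rw [← Ltot_eq_lcm, ← ell_mul_Lpart a i, ← mul_assoc] at h
  exact Nat.eq_of_mul_eq_mul_right (Lpart_pos ha i) h

theorem ell_dvd_Ltot_div {i j : Fin n} (h : j ≠ i) : ell a i ∣ Ltot a / a j :=
  Nat.div_dvd_div_left (Lpart_dvd_Ltot a i) (dvd_Lpart h)

theorem ell_coprime_Ltot_div (ha : ∀ i, 0 < a i) (i : Fin n) :
    (ell a i).Coprime (Ltot a / a i) := by
  have hgcd : 0 < (a i).gcd (Lpart a i) := Nat.gcd_pos_of_pos_left _ (ha i)
  have hell : ell a i = a i / (a i).gcd (Lpart a i) :=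
    Nat.eq_div_of_mul_eq_right hgcd.ne' (gcd_mul_ell ha i)
  have hdiv : Ltot a / a i = Lpart a i / (a i).gcd (Lpart a i) := by
    rw [Ltot_eq_lcm a i, Nat.lcm, Nat.mul_div_assoc _ (Nat.gcd_dvd_right _ _),
      Nat.mul_div_cancel_left _ (ha i)]
  rw [hell, hdiv]
  exact Nat.coprime_div_gcd_div_gcd hgcd

theorem ell_coprime (ha : ∀ i, 0 < a i) : Pairwise fun i j => (ell a i).Coprime (ell a j) :=
  fun i _ hij => (ell_coprime_Ltot_div ha i).coprime_dvd_right (ell_dvd_Ltot_div hij)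

theorem dvd_ell (hn : 2 ≤ n) {i : Fin n} {γ : ℕ}
    (h : ∀ j, j ≠ i → γ ∣ Ltot a / a j) : γ ∣ ell a i := by
  have hmul : ∀ j, j ≠ i → a j * γ ∣ Ltot a := fun j hj =>
    (Nat.dvd_div_iff_mul_dvd (dvd_Ltot a j)).1 (h j hj)
  have : Nontrivial (Fin n) := Fin.nontrivial_iff_two_le.2 hn
  obtain ⟨j, hj⟩ := exists_ne i
  have hγ : γ ∣ Ltot a := (dvd_mul_left _ _).trans (hmul j hj)
  have hLpart : Lpart a i ∣ Ltot a / γ := Finset.lcm_dvd fun j hj => by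
    rw [Nat.dvd_div_iff_mul_dvd hγ, mul_comm]
    exact hmul j (Finset.ne_of_mem_erase hj)
  rwa [ell, Nat.dvd_div_iff_mul_dvd (Lpart_dvd_Ltot a i), mul_comm,
    ← Nat.dvd_div_iff_mul_dvd hγ]

theorem dvd_monomialDeg_iff_dvd_apply (ha : ∀ i, 0 < a i) {i : Fin n} {e : ℕ} (he : e ∣ ell a i)
    (s : Fin n →₀ ℕ) : e ∣ monomialDeg a s ↔ e ∣ s i := by
  have hrest : e ∣ ∑ j ∈ Finset.univ.erase i, s j * (Ltot a / a j) := Finset.dvd_sum fun j hj =>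
    (he.trans (ell_dvd_Ltot_div (Finset.ne_of_mem_erase hj))).mul_left _
  rw [monomialDeg_eq_sum, ← Finset.add_sum_erase _ _ (Finset.mem_univ i), Nat.dvd_add_left hrest]
  exact ((ell_coprime_Ltot_div ha i).coprime_dvd_left he).dvd_mul_right

theorem dvd_monomialDeg_iff (ha : ∀ i, 0 < a i) {g : ℕ} (hg : g ∣ ∏ i, ell a i)
    (s : Fin n →₀ ℕ) : g ∣ monomialDeg a s ↔ ∀ i, g.gcd (ell a i) ∣ s i := by
  rw [dvd_iff_forall_gcd_dvd (ell_coprime ha) hg]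
  exact forall_congr' fun i => dvd_monomialDeg_iff_dvd_apply ha (Nat.gcd_dvd_right _ _) s

theorem gcd_mul_PBexp (ha : ∀ i, 0 < a i) (d : ℕ) (i : Fin n) :
    d.gcd (ell a i) * PBexp a d i = a i := by
  change _ * (_ * (ell a i / d.gcd (ell a i))) = _
  rw [mul_left_comm, Nat.mul_div_cancel' (Nat.gcd_dvd_right _ _), gcd_mul_ell ha i]

theorem PBexp_pos (ha : ∀ i, 0 < a i) (d : ℕ) (i : Fin n) : 0 < PBexp a d i :=
  Nat.pos_of_mul_pos_left (gcd_mul_PBexp ha d i ▸ ha i)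

theorem exists_dvd_monomialDeg_sub {d : ℕ} (hd : 0 < d) (i : Fin n) {x : ℤ}
    (hx : x ∈ AddSubgroup.closure
      (insert (d : ℤ) ((fun j => ((Ltot a / a j : ℕ) : ℤ)) '' {j | j ≠ i}))) :
    ∃ h : Fin n →₀ ℕ, h i = 0 ∧ (d : ℤ) ∣ monomialDeg a h - x := by
  induction hx using AddSubgroup.closure_induction with
  | mem x hx =>
    rcases hx with rfl | ⟨j, hj, rfl⟩
    · exact ⟨0, rfl, by simp [monomialDeg]⟩
    · exact ⟨Finsupp.single j 1, Finsupp.single_eq_of_ne hj.symm,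
        by simp [monomialDeg, Finsupp.weight_single]⟩
  | zero => exact ⟨0, rfl, by simp [monomialDeg]⟩
  | add x y _ _ hx hy =>
    obtain ⟨h, hi, hdvd⟩ := hx
    obtain ⟨h', hi', hdvd'⟩ := hy
    refine ⟨h + h', by simp [hi, hi'], ?_⟩
    rw [monomialDeg_add, Nat.cast_add, add_sub_add_comm]
    exact dvd_add hdvd hdvd'
  | neg x _ hx =>
    obtain ⟨h, hi, hdvd⟩ := hx
    refine ⟨(d - 1) • h, by simp [hi], ?_⟩
    have heq : ((monomialDeg a ((d - 1) • h) : ℕ) : ℤ) - -x =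
        d * monomialDeg a h - (monomialDeg a h - x) := by
      rw [monomialDeg_nsmul]
      push_cast [Nat.cast_pred hd]
      ring
    rw [heq]
    exact dvd_sub (dvd_mul_right _ _) hdvd

theorem exists_dvd_monomialDeg_add (hn : 2 ≤ n) {d : ℕ} (hd : 0 < d)
    (i : Fin n) {t : ℕ} (ht : d.gcd (ell a i) ∣ t) :
    ∃ h : Fin n →₀ ℕ, h i = 0 ∧ d ∣ monomialDeg a h + t := by
  set H := AddSubgroup.closure
    (insert (d : ℤ) ((fun j => ((Ltot a / a j : ℕ) : ℤ)) '' {j | j ≠ i}))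
  obtain ⟨γ, hγ⟩ := Int.subgroup_cyclic H
  have hdvd : ∀ x : ℕ, (x : ℤ) ∈ H → γ.natAbs ∣ x := fun x hx => by
    rw [hγ, ← AddSubgroup.zmultiples_eq_closure, Int.mem_zmultiples_iff] at hx
    exact Int.natAbs_dvd_natAbs.2 hx
  have hell : γ.natAbs ∣ ell a i := dvd_ell hn fun j hj =>
    hdvd _ (AddSubgroup.subset_closure (Or.inr ⟨j, hj, rfl⟩))
  have hγt : γ.natAbs ∣ t :=
    (Nat.dvd_gcd (hdvd d (AddSubgroup.subset_closure (Or.inl rfl))) hell).trans ht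
  have htH : -(t : ℤ) ∈ H := by
    rw [hγ, ← AddSubgroup.zmultiples_eq_closure, neg_mem_iff, Int.mem_zmultiples_iff]
    exact Int.natAbs_dvd.1 (Int.natCast_dvd_natCast.2 hγt)
  obtain ⟨h, hi, hmem⟩ := exists_dvd_monomialDeg_sub hd i htH
  rw [sub_neg_eq_add] at hmem
  exact ⟨h, hi, by exact_mod_cast hmem⟩

end CofactorArithmetic

section VeroneseLift

open MvPolynomial

theorem pow_mul_apply_mem {K : Type*} [Field K] {E : Derivation ℤ K K} {A C : Subring K}
    (hAC : A ≤ C) (hE : ∀ x ∈ A, E x ∈ A) {N : ℕ} (hN : (N : K) ≠ 0) (hNC : (N : K)⁻¹ ∈ C)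
    {h c : K} (hh : h ∈ C) (hc : c ∈ C) (hhc : h * c ∈ A) (hhN : h ^ N ∈ A) :
    h ^ N * E c ∈ C := by
  have hformula : h ^ N * E c = h ^ (N - 1) * E (h * c) - c * ((N : K)⁻¹ * E (h ^ N)) := by
    obtain ⟨m, rfl⟩ := Nat.exists_eq_succ_of_ne_zero fun h0 : N = 0 => hN (by simp [h0])
    simp only [Derivation.leibniz, Derivation.leibniz_pow, smul_eq_mul, nsmul_eq_mul]
    field_simp
    simp only [Nat.succ_eq_add_one, Nat.add_sub_cancel]
    ring
  rw [hformula]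
  exact sub_mem (mul_mem (pow_mem hh _) (hAC (hE _ hhc)))
    (mul_mem hc (mul_mem hNC (hAC (hE _ hhN))))

variable {k : Type*} [Field k] {n : ℕ} {a : Fin n → ℕ}

theorem PBmk_monomial_one_mem {S : Submonoid (PBring k a)} {s : Fin n →₀ ℕ}
    (hS : ∀ i, s i ≠ 0 → PBmk k a (X i) ∈ S) : PBmk k a (monomial s 1) ∈ S := by
  rw [← prod_X_pow_eq_monomial, map_prod]
  refine Submonoid.prod_mem _ fun i hi => ?_
  rw [map_pow]
  exact pow_mem (hS i (Finsupp.mem_support_iff.1 hi)) _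

theorem PBmk_monomial_mem_regularMod (hn : 3 ≤ n) (ha : ∀ i, 0 < a i) {i : Fin n}
    {s : Fin n →₀ ℕ} (hs : s i = 0) :
    PBmk k a (monomial s 1) ∈ regularMod (PBmk k a (X i)) :=
  PBmk_monomial_one_mem fun j hj _ =>
    dvd_of_PBmk_X_dvd_mul hn ha fun hij : i = j => hj (hij ▸ hs)

theorem PBmk_monomial_mem_closure (s : Fin n →₀ ℕ) :
    PBmk k a (monomial s 1) ∈ Submonoid.closure (Set.range fun i => PBmk k a (X i)) :=
  PBmk_monomial_one_mem fun i _ => Submonoid.subset_closure ⟨i, rfl⟩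

theorem algebraMap_mem_verZ (d : ℕ) (c : k) :
    algebraMap k (PBring k a) c ∈ verZ (PBpiece k a) d :=
  PBmk_monomial_mem_verZ (s := 0) (by simp [monomialDeg_eq_sum]) c

variable [CharZero k] {K : Type*} [Field K] [Algebra (PBring k a) K]

theorem isAlgebraic_map_verZ (hn : 3 ≤ n) (ha : ∀ i, 0 < a i) [IsFractionRing (PBring k a) K]
    {d : ℕ} (hd : 0 < d) :
    Algebra.IsAlgebraic ((verZ (PBpiece k a) d).map (algebraMap (PBring k a) K)) K := by
  have := PBring_isDomain (k := k) hn ha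
  have := isIntegral_verZ k a hd
  have : Algebra.IsAlgebraic (PBring k a) K :=
    IsLocalization.isAlgebraic _ (nonZeroDivisors (PBring k a))
  have : IsScalarTower (verZ (PBpiece k a) d) (PBring k a) K := .of_algebraMap_eq fun _ => rfl
  have : Algebra.IsAlgebraic (verZ (PBpiece k a) d) K := .trans _ (PBring k a) _
  exact .ringHom_of_comp_eq
    ((verZ (PBpiece k a) d).equivMapOfInjective _ (IsFractionRing.injective _ K)).toRingHom
    (RingHom.id K) (RingEquiv.injective _) Function.surjective_id rfl

theorem mem_verZ_of_algebraMap_mem_closure (hn : 3 ≤ n) (ha : ∀ i, 0 < a i)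
    [FaithfulSMul (PBring k a) K] {d : ℕ} {b : PBring k a}
    (hb : algebraMap (PBring k a) K b ∈
      Subfield.closure ((verZ (PBpiece k a) d).map (algebraMap (PBring k a) K) : Set K)) :
    b ∈ verZ (PBpiece k a) d := by
  have := PBring_isDomain (k := k) hn ha
  have hinj := FaithfulSMul.algebraMap_injective (PBring k a) K
  obtain ⟨y, hy, z, hz, hyz⟩ := Subfield.mem_closure_iff.1 hb
  rw [Subring.closure_eq] at hy hz
  obtain ⟨y, hy, rfl⟩ := hy
  obtain ⟨z, hz, rfl⟩ := hz
  obtain rfl | hz0 := eq_or_ne z 0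
  · have : b = 0 := hinj (by rw [← hyz]; simp)
    exact this ▸ zero_mem _
  · refine mem_verZ_of_mul_mem hz0 hz ?_
    have hz0' : algebraMap (PBring k a) K z ≠ 0 := (map_ne_zero_iff _ hinj).2 hz0
    have : z * b = y := hinj (by rw [map_mul, ← hyz]; field_simp)
    rwa [this]

theorem monomial_pow_mul_apply_mem [FaithfulSMul (PBring k a) K] {d g : ℕ}
    (hd : 0 < d) (hg : g ∣ d) {E : Derivation ℤ K K}
    (hE : ∀ x ∈ (verZ (PBpiece k a) d).map (algebraMap (PBring k a) K),
      E x ∈ (verZ (PBpiece k a) d).map (algebraMap (PBring k a) K))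
    {s h : Fin n →₀ ℕ} (hs : g ∣ monomialDeg a s) (hhs : d ∣ monomialDeg a h + monomialDeg a s)
    (c : k) :
    PBmk k a (monomial h 1) ^ d ∈ verZ (PBpiece k a) g ∧
      algebraMap (PBring k a) K (PBmk k a (monomial h 1) ^ d) *
          E (algebraMap (PBring k a) K (PBmk k a (monomial s c))) ∈
        (verZ (PBpiece k a) g).map (algebraMap (PBring k a) K) := by
  have hle := verZ_PBpiece_le_of_dvd (k := k) (a := a) hg
  have hh : g ∣ monomialDeg a h := (Nat.dvd_add_left hs).1 (hg.trans hhs)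
  let φ : k →+* K := (algebraMap (PBring k a) K).comp (algebraMap k (PBring k a))
  have hd0 : (d : K) ≠ 0 := by
    rw [← map_natCast φ, map_ne_zero]
    exact Nat.cast_ne_zero.2 hd.ne'
  have hinv : (d : K)⁻¹ ∈ (verZ (PBpiece k a) g).map (algebraMap (PBring k a) K) := by
    rw [← map_natCast φ, ← map_inv₀]
    exact ⟨_, algebraMap_mem_verZ g _, rfl⟩
  have hmul : PBmk k a (monomial h 1) * PBmk k a (monomial s c) ∈ verZ (PBpiece k a) d := by
    rw [← map_mul, monomial_mul]
    exact PBmk_monomial_mem_verZ (by rwa [monomialDeg_add]) _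
  refine ⟨pow_mem (PBmk_monomial_mem_verZ hh 1) d, ?_⟩
  rw [map_pow]
  exact pow_mul_apply_mem (Set.image_mono hle) hE hd0 hinv ⟨_, PBmk_monomial_mem_verZ hh 1, rfl⟩
    ⟨_, PBmk_monomial_mem_verZ hs c, rfl⟩ ⟨_, hmul, map_mul _ _ _⟩
    ⟨_, PBmk_monomial_pow_mem_verZ k a d h 1, map_pow _ _ _⟩

theorem apply_verMonomials_mem (hn : 3 ≤ n) (ha : ∀ i, 0 < a i) [FaithfulSMul (PBring k a) K]
    {d g : ℕ} (hd : 0 < d) (hg : g ∣ d) (hdg : ∀ i, d.gcd (ell a i) ∣ g) {E : Derivation ℤ K K}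
    (hE : ∀ x ∈ (verZ (PBpiece k a) d).map (algebraMap (PBring k a) K),
      E x ∈ (verZ (PBpiece k a) d).map (algebraMap (PBring k a) K))
    {c : PBring k a} (hc : c ∈ verMonomials k a g) :
    E (algebraMap (PBring k a) K c) ∈ (verZ (PBpiece k a) g).map (algebraMap (PBring k a) K) := by
  have := PBring_isDomain (k := k) hn ha
  have hinj := FaithfulSMul.algebraMap_injective (PBring k a) K
  obtain ⟨s, c, hs, rfl⟩ := hc
  choose h hi hhs using fun i => exists_dvd_monomialDeg_add (by lia) hd i ((hdg i).trans hs)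
  have hmul := fun i => monomial_pow_mul_apply_mem hd hg hE hs (hhs i) c
  let i₀ : Fin n := ⟨0, by lia⟩
  have hrange : ∀ {x}, x ∈ (verZ (PBpiece k a) g).map (algebraMap (PBring k a) K) →
    x ∈ (algebraMap (PBring k a) K).range := fun ⟨b, _, hb⟩ => ⟨b, hb⟩
  obtain ⟨b, hb⟩ := mem_range_algebraMap_of_mem_closure (PBmk_X_ne_zero hn ha)
    (fun i => ⟨_, pow_mem (PBmk_monomial_mem_regularMod hn ha (hi i)) d, hrange (hmul i).2⟩)
    (pow_mem (PBmk_monomial_mem_closure (h i₀)) d) (hrange (hmul i₀).2)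
  obtain ⟨hmem, y, hy, hyb⟩ := hmul i₀
  rw [← hb, ← map_mul, hinj.eq_iff] at hyb
  have hne : PBmk k a (monomial (h i₀) 1) ≠ 0 := nonZeroDivisors.ne_zero
    (PBmk_monomial_one_mem fun i _ => mem_nonZeroDivisors_of_ne_zero (PBmk_X_ne_zero hn ha i))
  exact ⟨b, mem_verZ_of_mul_mem (pow_ne_zero d hne) hmem (hyb ▸ hy), hb⟩

theorem NonRigid.verZ_of_dvd (hn : 3 ≤ n) (ha : ∀ i, 0 < a i) {d g : ℕ} (hd : 0 < d)
    (hg : g ∣ d) (hdg : ∀ i, d.gcd (ell a i) ∣ g) (h : NonRigid (verZ (PBpiece k a) d)) :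
    NonRigid (verZ (PBpiece k a) g) := by
  have := PBring_isDomain (k := k) hn ha
  have : CharZero (PBring k a) :=
    charZero_of_injective_algebraMap (algebraMap k (PBring k a)).injective
  let K := FractionRing (PBring k a)
  have hinj := IsFractionRing.injective (PBring k a) K
  have := isAlgebraic_map_verZ (K := K) (k := k) hn ha hd
  have : NonRigid ((verZ (PBpiece k a) g).map (algebraMap (PBring k a) K)) := by
    refine NonRigid.of_le (A := (verZ (PBpiece k a) d).map (algebraMap (PBring k a) K))
      (M := algebraMap (PBring k a) K '' verMonomials k a g) (N := d - 1)
      (Set.image_mono (verZ_PBpiece_le_of_dvd hg)) ?_ ?_ ?_ ?_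
      (h.congr (Subring.equivMapOfInjective _ _ hinj))
    · have hmap : ((verZ (PBpiece k a) g).map (algebraMap (PBring k a) K)).toAddSubgroup =
          (verZ (PBpiece k a) g).toAddSubgroup.map (algebraMap (PBring k a) K : _ →+ K) := rfl
      rw [hmap, verZ_toAddSubgroup, AddMonoidHom.map_closure]
      rfl
    · rintro _ ⟨_, ⟨s, c, _, rfl⟩, rfl⟩
      rw [Nat.sub_add_cancel hd, ← map_pow]
      exact ⟨_, PBmk_monomial_pow_mem_verZ k a d s c, rfl⟩
    · rintro _ ⟨b, _, rfl⟩ hb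
      exact ⟨b, mem_verZ_of_algebraMap_mem_closure hn ha hb, rfl⟩
    · rintro E hE _ ⟨c, hc, rfl⟩
      exact apply_verMonomials_mem hn ha hd hg hdg hE hc
  exact this.congr (Subring.equivMapOfInjective _ _ hinj).symm

end VeroneseLift

section PowerSubstitution

open MvPolynomial

section

variable (R : Type*) [CommRing R] {σ : Type*} (e : σ → ℕ)

/-- The substitution `X i ↦ X i ^ e i`. -/
def powSubst : MvPolynomial σ R →ₐ[R] MvPolynomial σ R := aeval fun i => X i ^ e i

variable {e}

theorem powSubst_injective (he : ∀ i, 0 < e i) : Function.Injective (powSubst R e) := by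
  rcases subsingleton_or_nontrivial R
  · exact Function.injective_of_subsingleton _
  · have halg := (algebraicIndependent_X σ R).polynomial_aeval_of_transcendental
      fun i => (Polynomial.transcendental_X R).pow (he i)
    simp only [map_pow, Polynomial.aeval_X] at halg
    exact halg

variable {R}

theorem powSubst_monomial (s : σ →₀ ℕ) (c : R) :
    powSubst R e (monomial s c) = monomial (e • s) c := by
  have hsupp : (e • s).support ⊆ s.support := fun i hi =>
    Finsupp.mem_support_iff.2 (right_ne_zero_of_mul (Finsupp.mem_support_iff.1 hi))
  rw [powSubst, aeval_monomial, monomial_eq (s := e • s), algebraMap_eq,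
    (e • s).prod_of_support_subset hsupp _ fun _ _ => pow_zero _]
  simp only [Finsupp.prod, Finsupp.coe_pointwise_smul, Pi.smul_apply', smul_eq_mul, pow_mul]

theorem mem_range_powSubst_iff {p : MvPolynomial σ R} :
    p ∈ (powSubst R e).range ↔ ∀ s, coeff s p ≠ 0 → ∀ i, e i ∣ s i := by
  classical
  constructor
  · rintro ⟨p, rfl⟩ s hs i
    rw [AlgHom.toRingHom_eq_coe, RingHom.coe_coe, p.as_sum, map_sum, coeff_sum] at hs
    obtain ⟨t, _, ht⟩ := Finset.exists_ne_zero_of_sum_ne_zero hs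
    rw [powSubst_monomial, coeff_monomial] at ht
    obtain rfl : e • t = s := by_contra fun h => ht (if_neg h)
    exact dvd_mul_right _ _
  · intro h
    rw [p.as_sum]
    refine sum_mem fun s hs => ?_
    rw [monomial_eq, C_eq_algebraMap]
    refine mul_mem (Subalgebra.algebraMap_mem _ _) (prod_mem fun i _ => ?_)
    obtain ⟨m, hm⟩ := h s (mem_support_iff.1 hs) i
    exact ⟨X i ^ m, by simp [powSubst, hm, pow_mul]⟩

end

variable {k : Type*} [Field k] {n : ℕ} {a : Fin n → ℕ} {g : ℕ}

theorem powSubst_PBpoly (ha : ∀ i, 0 < a i) (g : ℕ) :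
    powSubst k (fun i => g.gcd (ell a i)) (PBpoly k (PBexp a g)) = PBpoly k a := by
  simp only [PBpoly, powSubst, map_sum, map_pow, aeval_X, ← pow_mul, gcd_mul_PBexp ha]

variable (k) in
theorem verPoly_eq_range_powSubst (ha : ∀ i, 0 < a i) (hg : g ∣ ∏ i, ell a i) :
    verPoly k a g = (powSubst k fun i => g.gcd (ell a i)).range.toSubring := by
  ext p
  simp only [mem_verPoly_iff, dvd_monomialDeg_iff ha hg, Subalgebra.mem_toSubring,
    mem_range_powSubst_iff]

theorem PBmk_powSubst_eq_zero_iff (ha : ∀ i, 0 < a i) (hg : g ∣ ∏ i, ell a i)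
    {p : MvPolynomial (Fin n) k} :
    PBmk k a (powSubst k (fun i => g.gcd (ell a i)) p) = 0 ↔ PBpoly k (PBexp a g) ∣ p := by
  set θ := powSubst k fun i => g.gcd (ell a i)
  have hθ : ∀ q, θ q ∈ verPoly k a g := fun q => by
    rw [verPoly_eq_range_powSubst k ha hg]
    exact ⟨q, rfl⟩
  have hpos : ∀ i, 0 < g.gcd (ell a i) := fun i => Nat.gcd_pos_of_pos_right _ (ell_pos ha i)
  rw [PBmk_eq_zero_iff, ← powSubst_PBpoly ha g]
  refine ⟨fun ⟨t, ht⟩ => ?_, map_dvd θ⟩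
  have hcomp := congrArg (weightedHomogeneousComponent (modWeight a g) 0) ht
  rw [weightedHomogeneousComponent_of_mem_verPoly (hθ p),
    weightedHomogeneousComponent_zero_mul_of_left (hθ _)] at hcomp
  have ht₀ : weightedHomogeneousComponent (modWeight a g) 0 t ∈ verPoly k a g :=
    weightedHomogeneousComponent_mem _ _ _
  rw [verPoly_eq_range_powSubst k ha hg] at ht₀
  obtain ⟨q, hq⟩ := ht₀
  refine ⟨q, powSubst_injective k hpos ?_⟩
  rw [hcomp, map_mul]
  exact congrArg _ hq.symm

variable (k) in
/-- The identification of `PBring k (PBexp a g)` with the `g`-th Veronese subring induced by the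
substitution `X i ↦ X i ^ gcd(g, L / Lᵢ)`. -/
def PBringEquivVerZ (ha : ∀ i, 0 < a i) (hg : g ∣ ∏ i, ell a i) :
    PBring k (PBexp a g) ≃+* verZ (PBpiece k a) g := by
  let θ := (PBmk k a).comp (powSubst k fun i => g.gcd (ell a i)).toRingHom
  have hker : Ideal.span {PBpoly k (PBexp a g)} = RingHom.ker θ := by
    ext p
    rw [Ideal.mem_span_singleton, RingHom.mem_ker]
    exact (PBmk_powSubst_eq_zero_iff ha hg).symm
  have hrange : θ.range = verZ (PBpiece k a) g := by
    rw [verZ_PBpiece_eq_map, verPoly_eq_range_powSubst k ha hg, RingHom.range_eq_map,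
      ← Subring.map_map, ← RingHom.range_eq_map]
    rfl
  exact (Ideal.quotEquivOfEq hker).trans
    ((RingHom.quotientKerEquivRange θ).trans (RingEquiv.subringCongr hrange))

end PowerSubstitution

section NonRigidPhamBrieskorn

open MvPolynomial

theorem mem_nilSub_of_forall_X_mem {k σ : Type*} [CommRing k]
    {D : Derivation k (MvPolynomial σ k) (MvPolynomial σ k)} (hD : ∀ i, X i ∈ nilSub D)
    (p : MvPolynomial σ k) : p ∈ nilSub D := by
  induction p using MvPolynomial.induction_on with
  | C c => exact mem_nilSub_of_apply_eq_zero (derivation_C D c)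
  | add p q hp hq => exact add_mem hp hq
  | mul_X p i hp => exact mul_mem hp (hD i)

variable {k : Type*} [Field k] {n : ℕ} {a : Fin n → ℕ}

theorem nonRigid_PBring_of_mem_nilSub
    {D : Derivation k (MvPolynomial (Fin n) k) (MvPolynomial (Fin n) k)}
    (hD : ∀ i, X i ∈ nilSub D) (hP : D (PBpoly k a) = 0) {i : Fin n}
    (hi : ¬ PBpoly k a ∣ D (X i)) : NonRigid (PBring k a) := by
  refine .of_surjective (PBmk_surjective k a) (mem_nilSub_of_forall_X_mem hD)
    (fun p hp => ?_) (x := X i) (mt PBmk_eq_zero_iff.1 hi)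
  obtain ⟨t, rfl⟩ := PBmk_eq_zero_iff.1 hp
  rw [PBmk_eq_zero_iff, D.leibniz, hP, smul_zero, add_zero]
  exact dvd_mul_right _ _

/- The derivation `δ P • ∂ₗ - ∂ₗ P • δ` kills `P`, and is triangular: it kills `δ P`, sends `Xₗ` to
`δ P`, and sends the other variables to multiples of `∂ₗ P`, a polynomial in `Xₗ`. -/
theorem nonRigid_PBring_of_derivation
    {δ : Derivation k (MvPolynomial (Fin n) k) (MvPolynomial (Fin n) k)} {l : Fin n}
    (hδ : ∀ m, ∃ c, δ (X m) = C c) (hl : δ (X l) = 0) (hδδ : δ (δ (PBpoly k a)) = 0)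
    (hlδ : pderiv l (δ (PBpoly k a)) = 0) (hdvd : ¬ PBpoly k a ∣ δ (PBpoly k a)) :
    NonRigid (PBring k a) := by
  let P := PBpoly k a
  let D : Derivation k (MvPolynomial (Fin n) k) (MvPolynomial (Fin n) k) :=
    δ P • pderiv l - pderiv l P • δ
  have hD : ∀ p, D p = δ P * pderiv l p - pderiv l P * δ p := fun _ => rfl
  have hDl : D (X l) = δ P := by rw [hD, pderiv_X_self, hl, mul_one, mul_zero, sub_zero]
  have hC : ∀ c : k, (C c : MvPolynomial (Fin n) k) ∈ nilSub D := fun c =>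
    mem_nilSub_of_apply_eq_zero (derivation_C D c)
  have hδP : δ P ∈ nilSub D := mem_nilSub_of_apply_eq_zero
    (by rw [hD, hlδ, hδδ, mul_zero, mul_zero, sub_zero])
  have hXl : X l ∈ nilSub D := mem_nilSub_of_apply_mem (hDl ▸ hδP)
  have hlP : pderiv l P ∈ nilSub D := by
    rw [pderiv_PBpoly]
    exact mul_mem (hC _) (pow_mem hXl _)
  refine nonRigid_PBring_of_mem_nilSub (D := D) (fun m => ?_) ?_ (hDl ▸ hdvd)
  · obtain rfl | hml := eq_or_ne m l
    · exact hXl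
    obtain ⟨c, hc⟩ := hδ m
    refine mem_nilSub_of_apply_mem ?_
    rw [hD, pderiv_X_of_ne hml, hc, mul_zero, zero_sub]
    exact neg_mem (mul_mem hlP (hC c))
  · rw [hD, mul_comm, sub_self]

theorem nonRigid_PBring_of_eq_one (ha : ∀ i, 0 < a i) {i j : Fin n} (hij : i ≠ j) (hi : a i = 1) :
    NonRigid (PBring k a) := by
  have hP : pderiv i (PBpoly k a) = 1 := by simp [pderiv_PBpoly, hi]
  refine nonRigid_PBring_of_derivation (δ := pderiv i) (l := j) (fun m => ?_)
    (pderiv_X_of_ne hij.symm) ?_ ?_ fun hdvd => ?_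
  · exact ⟨(Pi.single i 1 : Fin n → k) m, by
      obtain rfl | h := eq_or_ne m i <;> simp [*]⟩
  · rw [hP, pderiv_one]
  · rw [hP, pderiv_one]
  · have h0 := map_dvd (eval (Pi.single j 0)) hdvd
    rw [hP, map_one, eval_single_PBpoly ha, zero_pow (ha j).ne'] at h0
    exact zero_ne_one (zero_dvd_iff.1 h0).symm

theorem nonRigid_PBring_of_eq_two [NeZero (2 : k)] (hk : IsSquare (-1 : k)) (ha : ∀ i, 0 < a i)
    {i j l : Fin n} (hij : i ≠ j) (hil : i ≠ l) (hjl : j ≠ l) (hi : a i = 2) (hj : a j = 2) :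
    NonRigid (PBring k a) := by
  obtain ⟨ι, hι⟩ := hk
  let δ : Derivation k (MvPolynomial (Fin n) k) (MvPolynomial (Fin n) k) := pderiv i + ι • pderiv j
  have hδX : ∀ m, δ (X m) = C ((Pi.single i 1 + Pi.single j ι : Fin n → k) m) := fun m => by
    obtain rfl | hmi := eq_or_ne m i
    · simp [δ, pderiv_X_of_ne hij, hij]
    obtain rfl | hmj := eq_or_ne m j
    · simp [δ, pderiv_X_of_ne hmi, hmi, smul_eq_C_mul]
    · simp [δ, *]
  have hδP : δ (PBpoly k a) = C 2 * (X i + C ι * X j) := by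
    simp only [δ, Derivation.add_apply, Derivation.smul_apply, pderiv_PBpoly, hi, hj,
      smul_eq_C_mul, Nat.cast_ofNat, Nat.add_one_sub_one, pow_one]
    ring
  refine nonRigid_PBring_of_derivation (δ := δ) (l := l) (fun m => ⟨_, hδX m⟩) ?_ ?_ ?_
    fun hdvd => ?_
  · simp [hδX, hil.symm, hjl.symm]
  · simp [hδP, hδX, hij, hij.symm, ← C_mul, ← hι]
  · simp [hδP, pderiv_X_of_ne hil, pderiv_X_of_ne hjl]
  · have hroot : eval (Pi.single i 1 - Pi.single j ι) (PBpoly k a) = 0 := by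
      rw [PBpoly, map_sum, Fintype.sum_eq_add i j hij]
      · simp [hij, hij.symm, hi, hj, sq, ← hι]
      · intro m hm
        simp [hm, (ha m).ne']
    have h0 := map_dvd (eval (Pi.single i 1 - Pi.single j ι)) hdvd
    rw [hroot, zero_dvd_iff, hδP] at h0
    simp [hij, hij.symm, ← hι, one_add_one_eq_two, two_ne_zero] at h0

end NonRigidPhamBrieskorn

section CriticalSets

variable {n : ℕ} {a : Fin n → ℕ}

theorem eq_ell_of_gcd_eq_one (ha : ∀ i, 0 < a i) {i : Fin n}
    (hi : (a i).gcd (Lpart a i) = 1) : a i = ell a i := by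
  simpa [hi, eq_comm] using gcd_mul_ell ha i

theorem eq_two_mul_ell_of_gcd_eq_two (ha : ∀ i, 0 < a i) {i : Fin n}
    (hi : (a i).gcd (Lpart a i) = 2) : a i = 2 * ell a i := by
  simpa [hi, eq_comm] using gcd_mul_ell ha i

theorem mul_div_four_eq_ell_mul_ell (ha : ∀ i, 0 < a i) {i j : Fin n}
    (hi : (a i).gcd (Lpart a i) = 2) (hj : (a j).gcd (Lpart a j) = 2) :
    a i * a j / 4 = ell a i * ell a j := by
  rw [eq_two_mul_ell_of_gcd_eq_two ha hi, eq_two_mul_ell_of_gcd_eq_two ha hj,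
    mul_mul_mul_comm]
  exact Nat.mul_div_cancel_left _ (by norm_num)

theorem div_two_eq_ell (ha : ∀ i, 0 < a i) {i : Fin n} (hi : (a i).gcd (Lpart a i) = 2) :
    a i / 2 = ell a i := by
  have := eq_two_mul_ell_of_gcd_eq_two ha hi
  lia

theorem ell_ne_one_of_gcd_eq_one (ha : ∀ i, 1 < a i) {i : Fin n}
    (hi : (a i).gcd (Lpart a i) = 1) : ell a i ≠ 1 :=
  eq_ell_of_gcd_eq_one (fun i => (ha i).le) hi ▸ (ha i).ne'

theorem ell_ne_one_of_gcd_eq_two (ha : ∀ i, 0 < a i) {i : Fin n}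
    (hi : (a i).gcd (Lpart a i) = 2) (h2 : a i ≠ 2) : ell a i ≠ 1 := by
  have := eq_two_mul_ell_of_gcd_eq_two ha hi
  lia

variable (a) in
/-- `T` is `{i}` with `gcd(aᵢ, Lᵢ) = 1`, or `{i, j}` with `gcd(aᵢ, Lᵢ) = gcd(aⱼ, Lⱼ) = 2`. These are
the sets of indices whose exponents, when they drop to `gcd(aᵢ, Lᵢ)`, exclude membership in `Γₙ`. -/
def IsCritical (T : Finset (Fin n)) : Prop :=
  (∃ i, (a i).gcd (Lpart a i) = 1 ∧ T = {i}) ∨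
    ∃ i j, (a i).gcd (Lpart a i) = 2 ∧ (a j).gcd (Lpart a j) = 2 ∧ i ≠ j ∧ T = {i, j}

theorem isAntichain_isCritical : IsAntichain (· ⊆ ·) {T | IsCritical a T} := by
  rintro T hT T' hT' hne h
  refine hne ?_
  rcases hT with ⟨i, hi, rfl⟩ | ⟨i, j, hi, _, hij, rfl⟩ <;>
    rcases hT' with ⟨k, hk, rfl⟩ | ⟨k, l, hk, hl, hkl, rfl⟩
  · rw [Finset.singleton_subset_singleton.1 h]
  · rcases Finset.mem_insert.1 (Finset.singleton_subset_iff.1 h) with rfl | hil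
    · lia
    · obtain rfl := Finset.mem_singleton.1 hil
      lia
  · obtain rfl := Finset.mem_singleton.1 (h (Finset.mem_insert_self i {j}))
    lia
  · exact Finset.eq_of_subset_of_card_le h (by rw [Finset.card_pair hij, Finset.card_pair hkl])

theorem subset_of_prod_ell_dvd (ha : ∀ i, 0 < a i) {s t : Finset (Fin n)}
    (hs : ∀ i ∈ s, ell a i ≠ 1) (h : ∏ i ∈ s, ell a i ∣ ∏ i ∈ t, ell a i) : s ⊆ t := by
  intro i hi
  by_contra hit
  refine hs i hi (Nat.Coprime.eq_one_of_dvd (Nat.Coprime.prod_right fun j hj => ?_)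
    ((Finset.dvd_prod_of_mem _ hi).trans h))
  exact ell_coprime ha fun hij => hit (hij ▸ hj)

theorem PBexp_eq_gcd_of_ell_dvd (ha : ∀ i, 0 < a i) {d : ℕ} {i : Fin n} (h : ell a i ∣ d) :
    PBexp a d i = (a i).gcd (Lpart a i) := by
  refine Nat.eq_of_mul_eq_mul_left (ell_pos ha i) ?_
  nth_rw 1 [← Nat.gcd_eq_right h]
  rw [gcd_mul_PBexp ha, mul_comm, gcd_mul_ell ha]

theorem gcd_Lpart_dvd_PBexp (d : ℕ) (i : Fin n) : (a i).gcd (Lpart a i) ∣ PBexp a d i :=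
  dvd_mul_right _ _

theorem ell_dvd_of_PBexp_eq_gcd (ha : ∀ i, 0 < a i) {d : ℕ} {i : Fin n}
    (h : PBexp a d i = (a i).gcd (Lpart a i)) : ell a i ∣ d := by
  have hmul : d.gcd (ell a i) * PBexp a d i = ell a i * PBexp a d i := by
    rw [gcd_mul_PBexp ha, h, mul_comm, gcd_mul_ell ha]
  exact Nat.gcd_eq_right_iff_dvd.1 (Nat.eq_of_mul_eq_mul_right (PBexp_pos ha d i) hmul)

theorem gcd_Lpart_eq_two_of_PBexp_eq_two (ha : ∀ i, 0 < a i) {d : ℕ} {i j : Fin n} (hij : i ≠ j)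
    (hi : PBexp a d i = 2) (hj : PBexp a d j = 2) : (a i).gcd (Lpart a i) = 2 := by
  have hdvd : ∀ m, PBexp a d m ∣ a m := fun m => ⟨_, by rw [mul_comm, gcd_mul_PBexp ha]⟩
  refine Nat.dvd_antisymm (hi ▸ gcd_Lpart_dvd_PBexp d i) (Nat.dvd_gcd (hi ▸ hdvd i) ?_)
  exact (hj ▸ hdvd j).trans (dvd_Lpart hij.symm)

theorem exists_isCritical_of_not_gammaCond (ha : ∀ i, 0 < a i) {d : ℕ}
    (h : ¬ GammaCond (PBexp a d)) : ∃ T, IsCritical a T ∧ ∏ i ∈ T, ell a i ∣ d := by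
  rw [GammaCond, not_and_or] at h
  push Not at h
  rcases h with ⟨i, hi⟩ | ⟨i, j, hi, hj, hij⟩
  · have hone : PBexp a d i = 1 := by have := PBexp_pos ha d i; lia
    have hgcd : (a i).gcd (Lpart a i) = 1 := Nat.dvd_one.1 (hone ▸ gcd_Lpart_dvd_PBexp d i)
    refine ⟨{i}, .inl ⟨i, hgcd, rfl⟩, ?_⟩
    rw [Finset.prod_singleton]
    exact ell_dvd_of_PBexp_eq_gcd ha (hone.trans hgcd.symm)
  · have hgi := gcd_Lpart_eq_two_of_PBexp_eq_two ha hij hi hj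
    have hgj := gcd_Lpart_eq_two_of_PBexp_eq_two ha hij.symm hj hi
    refine ⟨{i, j}, .inr ⟨i, j, hgi, hgj, hij, rfl⟩, ?_⟩
    rw [Finset.prod_pair hij]
    exact (ell_coprime ha hij).mul_dvd_of_dvd_of_dvd
      (ell_dvd_of_PBexp_eq_gcd ha (hi.trans hgi.symm))
      (ell_dvd_of_PBexp_eq_gcd ha (hj.trans hgj.symm))

end CriticalSets

section NonRigidDegrees

variable {k : Type*} [Field k] [CharZero k] {n : ℕ} {a : Fin n → ℕ}

theorem prod_ell_mem_NRset (hk : IsSquare (-1 : k)) (hn : 3 ≤ n) (ha : ∀ i, 0 < a i)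
    {T : Finset (Fin n)} (hT : IsCritical a T) : ∏ i ∈ T, ell a i ∈ NRset (PBpiece k a) := by
  refine ⟨Finset.prod_pos fun i _ => ell_pos ha i, ?_⟩
  refine NonRigid.congr (PBringEquivVerZ k ha
    (Finset.prod_dvd_prod_of_subset _ _ _ (Finset.subset_univ T))) ?_
  have hexp : ∀ i ∈ T, PBexp a (∏ i ∈ T, ell a i) i = (a i).gcd (Lpart a i) := fun i hi =>
    PBexp_eq_gcd_of_ell_dvd ha (Finset.dvd_prod_of_mem _ hi)
  have hpos := PBexp_pos ha (∏ i ∈ T, ell a i)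
  rcases hT with ⟨i, hi, rfl⟩ | ⟨i, j, hi, hj, hij, rfl⟩
  · have : Nontrivial (Fin n) := Fin.nontrivial_iff_two_le.2 (by lia)
    obtain ⟨j, hj⟩ := exists_ne i
    exact nonRigid_PBring_of_eq_one hpos hj.symm ((hexp i (by simp)).trans hi)
  · obtain ⟨l, hl⟩ := Finset.exists_mem_notMem_of_card_lt_card
      (s := {i, j}) (t := Finset.univ) (by rw [Finset.card_pair hij, Finset.card_fin]; lia)
    have hil : i ≠ l := fun h => hl.2 (by simp [h])
    have hjl : j ≠ l := fun h => hl.2 (by simp [h])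
    exact nonRigid_PBring_of_eq_two hk hpos hij hil hjl
      ((hexp i (by simp)).trans hi) ((hexp j (by simp)).trans hj)

theorem exists_isCritical_of_mem_NRset (hn : 3 ≤ n) (ha : ∀ i, 0 < a i)
    (hrigid : ∀ g, g ∣ ∏ i, ell a i → GammaCond (PBexp a g) → ¬ NonRigid (PBring k (PBexp a g)))
    {d : ℕ} (hd : d ∈ NRset (PBpiece k a)) :
    ∃ T, IsCritical a T ∧ ∏ i ∈ T, ell a i ∣ d := by
  have hgdvd : d.gcd (∏ i, ell a i) ∣ ∏ i, ell a i := Nat.gcd_dvd_right _ _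
  have hNR : NonRigid (verZ (PBpiece k a) (d.gcd (∏ i, ell a i))) :=
    NonRigid.verZ_of_dvd hn ha hd.1 (Nat.gcd_dvd_left _ _)
      (fun i => Nat.gcd_dvd_gcd_of_dvd_right d (Finset.dvd_prod_of_mem _ (Finset.mem_univ i))) hd.2
  obtain ⟨T, hT, hdvd⟩ := exists_isCritical_of_not_gammaCond ha fun hΓ =>
    hrigid _ hgdvd hΓ (hNR.congr (PBringEquivVerZ k ha hgdvd).symm)
  exact ⟨T, hT, hdvd.trans (Nat.gcd_dvd_left _ _)⟩

end NonRigidDegrees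

section MaximalElements

variable {B : Type*} [CommRing B] {𝒜 : ℤ → AddSubgroup B}

theorem MsetZ_eq_of_isAntichain {S : Set ℕ} (hS : S ⊆ NRset 𝒜)
    (hdvd : ∀ d ∈ NRset 𝒜, ∃ s ∈ S, s ∣ d) (hanti : IsAntichain (· ∣ ·) S) : MsetZ 𝒜 = S := by
  ext d
  refine ⟨fun ⟨hd, hmax⟩ => ?_, fun hd => ⟨hS hd, fun e he hed => ?_⟩⟩
  · obtain ⟨s, hs, hsd⟩ := hdvd d hd
    exact hmax s (hS hs) hsd ▸ hs
  · obtain ⟨s, hs, hse⟩ := hdvd e he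
    obtain rfl := hanti.eq hs hd (hse.trans hed)
    exact Nat.dvd_antisymm hed hse

variable {n : ℕ} {a : Fin n → ℕ}

theorem MsetZ_eq_image_prod_ell (ha : ∀ i, 0 < a i) {𝒯 : Set (Finset (Fin n))}
    (h𝒯 : ∀ T ∈ 𝒯, ∏ i ∈ T, ell a i ∈ NRset 𝒜)
    (hdvd : ∀ d ∈ NRset 𝒜, ∃ T ∈ 𝒯, ∏ i ∈ T, ell a i ∣ d)
    (hone : ∀ T ∈ 𝒯, ∀ i ∈ T, ell a i ≠ 1) (hanti : IsAntichain (· ⊆ ·) 𝒯) :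
    MsetZ 𝒜 = (fun T => ∏ i ∈ T, ell a i) '' 𝒯 := by
  refine MsetZ_eq_of_isAntichain (Set.image_subset_iff.2 h𝒯) (fun d hd => ?_) ?_
  · obtain ⟨T, hT, hTd⟩ := hdvd d hd
    exact ⟨_, Set.mem_image_of_mem _ hT, hTd⟩
  · rintro _ ⟨T, hT, rfl⟩ _ ⟨T', hT', rfl⟩ hne hTT'
    obtain rfl := hanti.eq hT hT' (subset_of_prod_ell_dvd ha (hone T hT) hTT')
    exact hne rfl

theorem MsetZ_eq_of_forall_ne_two (ha : ∀ i, 1 < a i)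
    (hcrit : ∀ T, IsCritical a T → ∏ i ∈ T, ell a i ∈ NRset 𝒜)
    (hNR : ∀ d ∈ NRset 𝒜, ∃ T, IsCritical a T ∧ ∏ i ∈ T, ell a i ∣ d)
    (h2 : ∀ i, (a i).gcd (Lpart a i) = 2 → a i ≠ 2) :
    MsetZ 𝒜 = {m | ∃ i, (a i).gcd (Lpart a i) = 1 ∧ m = a i} ∪
      {m | ∃ i j, (a i).gcd (Lpart a i) = 2 ∧ (a j).gcd (Lpart a j) = 2 ∧ i ≠ j ∧
        m = a i * a j / 4} := by
  have hpos : ∀ i, 0 < a i := fun i => (ha i).le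
  rw [MsetZ_eq_image_prod_ell hpos hcrit hNR ?_ isAntichain_isCritical]
  · ext m
    constructor
    · rintro ⟨_, ⟨i, hi, rfl⟩ | ⟨i, j, hi, hj, hij, rfl⟩, rfl⟩
      · exact .inl ⟨i, hi, by simpa using (eq_ell_of_gcd_eq_one hpos hi).symm⟩
      · exact .inr ⟨i, j, hi, hj, hij,
          (Finset.prod_pair hij).trans (mul_div_four_eq_ell_mul_ell hpos hi hj).symm⟩
    · rintro (⟨i, hi, rfl⟩ | ⟨i, j, hi, hj, hij, rfl⟩)
      · exact ⟨{i}, .inl ⟨i, hi, rfl⟩, by simpa using (eq_ell_of_gcd_eq_one hpos hi).symm⟩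
      · exact ⟨{i, j}, .inr ⟨i, j, hi, hj, hij, rfl⟩,
          (Finset.prod_pair hij).trans (mul_div_four_eq_ell_mul_ell hpos hi hj).symm⟩
  · rintro _ (⟨i, hi, rfl⟩ | ⟨i, j, hi, hj, _, rfl⟩) l hl
    · obtain rfl := Finset.mem_singleton.1 hl
      exact ell_ne_one_of_gcd_eq_one ha hi
    · rcases Finset.mem_insert.1 hl with rfl | hl
      · exact ell_ne_one_of_gcd_eq_two hpos hi (h2 _ hi)
      · obtain rfl := Finset.mem_singleton.1 hl
        exact ell_ne_one_of_gcd_eq_two hpos hj (h2 _ hj)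

theorem MsetZ_eq_of_eq_two (ha : ∀ i, 1 < a i)
    (hcrit : ∀ T, IsCritical a T → ∏ i ∈ T, ell a i ∈ NRset 𝒜)
    (hNR : ∀ d ∈ NRset 𝒜, ∃ T, IsCritical a T ∧ ∏ i ∈ T, ell a i ∣ d) {i₀ : Fin n}
    (hgcd : (a i₀).gcd (Lpart a i₀) = 2) (h2 : a i₀ = 2) (hne : ∀ i, i ≠ i₀ → a i ≠ 2) :
    MsetZ 𝒜 = {m | ∃ i, (a i).gcd (Lpart a i) = 1 ∧ m = a i} ∪
      {m | ∃ i, (a i).gcd (Lpart a i) = 2 ∧ i ≠ i₀ ∧ m = a i / 2} := by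
  have hpos : ∀ i, 0 < a i := fun i => (ha i).le
  have hell : ell a i₀ = 1 := by
    have := eq_two_mul_ell_of_gcd_eq_two hpos hgcd
    lia
  rw [MsetZ_eq_image_prod_ell hpos (𝒯 := (fun i => {i}) ''
    ({i | (a i).gcd (Lpart a i) = 1} ∪ {i | (a i).gcd (Lpart a i) = 2 ∧ i ≠ i₀}))]
  · simp only [Set.image_image, Finset.prod_singleton, Set.image_union]
    congr 1 <;> ext m
    · refine exists_congr fun i => and_congr_right fun hi => ?_
      change ell a i = m ↔ _
      rw [← eq_ell_of_gcd_eq_one hpos hi, eq_comm]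
    · refine exists_congr fun i => and_assoc.trans (and_congr_right fun hi =>
        and_congr_right fun _ => ?_)
      change ell a i = m ↔ _
      rw [← div_two_eq_ell hpos hi, eq_comm]
  · rintro _ ⟨i, hi | ⟨hi, hi₀⟩, rfl⟩
    · exact hcrit _ (.inl ⟨i, hi, rfl⟩)
    · have hmem := hcrit _ (.inr ⟨i, i₀, hi, hgcd, hi₀, rfl⟩)
      rwa [Finset.prod_pair hi₀, hell, mul_one, ← Finset.prod_singleton (ell a) i] at hmem
  · intro d hd
    obtain ⟨_, ⟨i, hi, rfl⟩ | ⟨i, j, hi, hj, hij, rfl⟩, hdvd⟩ := hNR d hd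
    · exact ⟨_, ⟨i, .inl hi, rfl⟩, hdvd⟩
    · rw [Finset.prod_pair hij] at hdvd
      obtain rfl | hi₀ := eq_or_ne i i₀
      · exact ⟨_, ⟨j, .inr ⟨hj, hij.symm⟩, rfl⟩, by simpa using dvd_of_mul_left_dvd hdvd⟩
      · exact ⟨_, ⟨i, .inr ⟨hi, hi₀⟩, rfl⟩, by simpa using dvd_of_mul_right_dvd hdvd⟩
  · rintro _ ⟨i, hi | ⟨hi, hi₀⟩, rfl⟩ l hl <;> obtain rfl := Finset.mem_singleton.1 hl
    · exact ell_ne_one_of_gcd_eq_one ha hi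
    · exact ell_ne_one_of_gcd_eq_two hpos hi (hne _ hi₀)
  · rintro _ ⟨i, _, rfl⟩ _ ⟨j, _, rfl⟩ hij h
    exact hij (Finset.singleton_subset_singleton.1 h ▸ rfl)

end MaximalElements

theorem PhamBrieskorn_Mset_general
    {k : Type*} [Field k] [CharZero k] (hk : IsSquare (-1 : k)) (n : ℕ) (hn : 3 ≤ n)
    (a : Fin n → ℕ) (hGamma : GammaCond a)
    (hrigid : ∀ d : ℕ, 0 < d → d ∣ ∏ i : Fin n, Ltot a / Lpart a i →
      GammaCond (PBexp a d) →
      ∀ D : Derivation ℤ (PBring k (PBexp a d)) (PBring k (PBexp a d)),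
        IsLND D → D = 0) :
    (∀ i j : Fin n,
      (Nat.gcd (a i) (Lpart a i) = 2 ∧ a i = 2) →
      (Nat.gcd (a j) (Lpart a j) = 2 ∧ a j = 2) → i = j) ∧
    ((¬ ∃ i : Fin n, Nat.gcd (a i) (Lpart a i) = 2 ∧ a i = 2) →
      MsetZ (PBpiece k a) =
        { m : ℕ | ∃ i : Fin n, Nat.gcd (a i) (Lpart a i) = 1 ∧ m = a i } ∪
        { m : ℕ | ∃ i j : Fin n, Nat.gcd (a i) (Lpart a i) = 2 ∧
            Nat.gcd (a j) (Lpart a j) = 2 ∧ i ≠ j ∧ m = a i * a j / 4 }) ∧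
    (∀ i₀ : Fin n, Nat.gcd (a i₀) (Lpart a i₀) = 2 → a i₀ = 2 →
      MsetZ (PBpiece k a) =
        { m : ℕ | ∃ i : Fin n, Nat.gcd (a i) (Lpart a i) = 1 ∧ m = a i } ∪
        { m : ℕ | ∃ i : Fin n, Nat.gcd (a i) (Lpart a i) = 2 ∧ i ≠ i₀ ∧ m = a i / 2 }) := by
  have ha : ∀ i, 1 < a i := hGamma.1
  have hpos : ∀ i, 0 < a i := fun i => (ha i).le
  have hcrit : ∀ T, IsCritical a T → ∏ i ∈ T, ell a i ∈ NRset (PBpiece k a) := fun _ =>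
    prod_ell_mem_NRset hk hn hpos
  have hNR : ∀ d ∈ NRset (PBpiece k a), ∃ T, IsCritical a T ∧ ∏ i ∈ T, ell a i ∣ d := fun _ =>
    exists_isCritical_of_mem_NRset hn hpos fun g hg hΓ ⟨D, hD, hD0⟩ =>
      have hg0 := Nat.pos_of_dvd_of_pos hg (Finset.prod_pos fun i _ => ell_pos hpos i)
      hD0 (hrigid g hg0 hg hΓ D hD)
  refine ⟨fun i j hi hj => hGamma.2 i j hi.2 hj.2, fun hno => ?_, fun i₀ hgcd h2 => ?_⟩
  · exact MsetZ_eq_of_forall_ne_two ha hcrit hNR fun i hi h2 => hno ⟨i, hi, h2⟩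
  · exact MsetZ_eq_of_eq_two ha hcrit hNR hgcd h2 fun i hi h2' => hi (hGamma.2 i i₀ h2' h2)

/-- Let n ≥ 3 and (a₁,…,aₙ) ∈ Γₙ.  Assume that for every positive divisor d of
∏ᵢ (L/Lᵢ) with f(d) ∈ Γₙ the Pham–Brieskorn ring B_{ℂ;f(d)} is rigid, where
f(d) = (a₁′,…,aₙ′) with aᵢ′ = gcd(aᵢ,Lᵢ)·((L/Lᵢ)/gcd(d,L/Lᵢ)).  For ν ∈ {1,2} let
I_ν = { i : gcd(aᵢ,Lᵢ) = ν }.  Then at most one i₀ ∈ I₂ has a_{i₀} = 2, and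
M(B_{ℂ;a}) is { aᵢ : i ∈ I₁ } ∪ { aᵢaⱼ/4 : i ≠ j ∈ I₂ } if no such i₀ exists, and
{ aᵢ : i ∈ I₁ } ∪ { aᵢ/2 : i ∈ I₂ \ {i₀} } if i₀ exists. -/
theorem PhamBrieskorn_Mset
    (n : ℕ) (hn : 3 ≤ n) (a : Fin n → ℕ) (hGamma : GammaCond a)
    (hrigid : ∀ d : ℕ, 0 < d → d ∣ ∏ i : Fin n, Ltot a / Lpart a i →
      GammaCond (PBexp a d) →
      ∀ D : Derivation ℤ (PBring ℂ (PBexp a d)) (PBring ℂ (PBexp a d)),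
        IsLND D → D = 0) :
    (∀ i j : Fin n,
      (Nat.gcd (a i) (Lpart a i) = 2 ∧ a i = 2) →
      (Nat.gcd (a j) (Lpart a j) = 2 ∧ a j = 2) → i = j) ∧
    ((¬ ∃ i : Fin n, Nat.gcd (a i) (Lpart a i) = 2 ∧ a i = 2) →
      MsetZ (PBpiece ℂ a) =
        { m : ℕ | ∃ i : Fin n, Nat.gcd (a i) (Lpart a i) = 1 ∧ m = a i } ∪
        { m : ℕ | ∃ i j : Fin n, Nat.gcd (a i) (Lpart a i) = 2 ∧
            Nat.gcd (a j) (Lpart a j) = 2 ∧ i ≠ j ∧ m = a i * a j / 4 }) ∧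
    (∀ i₀ : Fin n, Nat.gcd (a i₀) (Lpart a i₀) = 2 → a i₀ = 2 →
      MsetZ (PBpiece ℂ a) =
        { m : ℕ | ∃ i : Fin n, Nat.gcd (a i) (Lpart a i) = 1 ∧ m = a i } ∪
        { m : ℕ | ∃ i : Fin n, Nat.gcd (a i) (Lpart a i) = 2 ∧ i ≠ i₀ ∧ m = a i / 2 }) := by
  exact PhamBrieskorn_Mset_general ⟨Complex.I, Complex.I_mul_I.symm⟩ n hn a hGamma hrigid
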